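/- (i) If Ω = Ω_D is a p-symmetric domain in M with Ω ∩ ℝ^{p+1} = ∅, then GSR(Ω_D) is strictly contained in GSM(Ω). (ii) If Ω = Ω_D is a p-symmetric domain in M with Ω ∩ ℝ^{p+1} ≠ ∅, then GSM(Ω) = GSR(Ω_D). -/

import Mathlib

open scoped BigOperators
open Filter Topology

namespace GPSM

variable (A : Type*) [NormedAddCommGroup A] [NormedSpace ℝ A] [Mul A] [One A]

/-- `A` is a real alternative algebra with unit `1`, of finite dimension `d > 1`,
equipped with an anti-involution `conj` (a real-linear map with `(a^c)^c = a`,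
`(ab)^c = b^c a^c`, fixing the reals).  The associator is alternating (left/right
alternative laws). -/
structure IsAltStarAlg (conj : A → A) : Prop where
  finDim : FiniteDimensional ℝ A
  one_lt_finrank : 1 < Module.finrank ℝ A
  mul_add' : ∀ a b c : A, a * (b + c) = a * b + a * c
  add_mul' : ∀ a b c : A, (a + b) * c = a * c + b * c
  smul_mul' : ∀ (r : ℝ) (a b : A), (r • a) * b = r • (a * b)
  mul_smul' : ∀ (r : ℝ) (a b : A), a * (r • b) = r • (a * b)
  one_mul' : ∀ a : A, 1 * a = a
  mul_one' : ∀ a : A, a * 1 = a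
  alt_left : ∀ a b : A, a * (a * b) = a * a * b
  alt_right : ∀ a b : A, a * b * b = a * (b * b)
  conj_add : ∀ a b : A, conj (a + b) = conj a + conj b
  conj_smul : ∀ (r : ℝ) (a : A), conj (r • a) = r • conj a
  conj_conj : ∀ a : A, conj (conj a) = a
  conj_mul : ∀ a b : A, conj (a * b) = conj b * conj a
  conj_one : conj 1 = 1

/-- `v 0, v 1, …, v m` is a hypercomplex basis of the hypercomplex subspace
`M = span(v 0, …, v m)` of `A`: `v 0 = 1`, `t(v s) = 0`, `n(v s) = 1`, the `v s`
anticommute for distinct `s, t ∈ {1,…,m}`, they are linearly independent, and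
`M` is contained in the quadratic cone `Q_A`. -/
structure IsHypBasis (conj : A → A) (v : ℕ → A) (m : ℕ) : Prop where
  v_zero : v 0 = 1
  trace_zero : ∀ s, 1 ≤ s → s ≤ m → v s + conj (v s) = 0
  norm_one : ∀ s, 1 ≤ s → s ≤ m → v s * conj (v s) = 1
  anticomm : ∀ s t, 1 ≤ s → s ≤ m → 1 ≤ t → t ≤ m → s ≠ t → v s * v t = -(v t * v s)
  indep : LinearIndependent ℝ (fun i : Fin (m + 1) => v i)
  mem_cone : ∀ x ∈ Submodule.span ℝ (Set.range fun i : Fin (m + 1) => v (i : ℕ)),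
      ∃ tr nr : ℝ, x + conj x = tr • (1 : A) ∧ x * conj x = nr • (1 : A) ∧
        ((∃ r : ℝ, x = r • (1 : A)) ∨ tr ^ 2 < 4 * nr)

variable {A}

/-- Identification of `ℝ^{m+1}` with the hypercomplex subspace `M`:
`(x_0,…,x_m) ↦ Σ x_s • v s`. -/
def emb (v : ℕ → A) (m : ℕ) (x : Fin (m + 1) → ℝ) : A :=
  ∑ s : Fin (m + 1), x s • v (s : ℕ)

/-- First `p+1` coordinates of a point of `M ≅ ℝ^{m+1}`, i.e. the `x_p`-part. -/
def projP (m p : ℕ) (x : Fin (m + 1) → ℝ) : Fin (p + 1) → ℝ := fun s =>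
  if h : (s : ℕ) < m + 1 then x ⟨(s : ℕ), h⟩ else 0

/-- Inclusion `ℝ^{p+1} ⊆ ℝ^{m+1}` (remaining coordinates `0`). -/
def injP (m p : ℕ) (y : Fin (p + 1) → ℝ) : Fin (m + 1) → ℝ := fun s =>
  if h : (s : ℕ) < p + 1 then y ⟨(s : ℕ), h⟩ else 0

/-- The coordinates of `x_q` (last `q = m - p` coordinates of `x`). -/
def xqpart (m p : ℕ) (x : Fin (m + 1) → ℝ) : Fin (m + 1) → ℝ := fun s =>
  if (s : ℕ) ≤ p then 0 else x s

/-- The coordinates of `x_p` inside `ℝ^{m+1}`. -/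
def xppart (m p : ℕ) (x : Fin (m + 1) → ℝ) : Fin (m + 1) → ℝ := fun s =>
  if (s : ℕ) ≤ p then x s else 0

/-- `r = |x_q|`. -/
noncomputable def rad (m p : ℕ) (x : Fin (m + 1) → ℝ) : ℝ :=
  Real.sqrt (∑ s : Fin (m + 1), (xqpart m p x s) ^ 2)

/-- `ω = x_q / |x_q|` (coordinates), `0` when `x_q = 0`. -/
noncomputable def normq (m p : ℕ) (x : Fin (m + 1) → ℝ) : Fin (m + 1) → ℝ :=
  (rad m p x)⁻¹ • xqpart m p x

/-- The reflection `x = x_p + x_q ↦ x_⋄ = x_p - x_q`. -/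
def reflP (m p : ℕ) (x : Fin (m + 1) → ℝ) : Fin (m + 1) → ℝ := fun s =>
  if (s : ℕ) ≤ p then x s else -x s

/-- The sphere `𝕊 = {x_q ∈ span(v_{p+1},…,v_m) : x_q² = -1}`, in coordinates. -/
def Sph (v : ℕ → A) (m p : ℕ) : Set (Fin (m + 1) → ℝ) :=
  {w | (∀ s : Fin (m + 1), (s : ℕ) ≤ p → w s = 0) ∧ emb v m w * emb v m w = -1}

/-- The point `x_p + r ω` of `M ≅ ℝ^{m+1}`. -/
def pt (m p : ℕ) (w : Fin (m + 1) → ℝ) (y : Fin (p + 1) → ℝ) (r : ℝ) :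
    Fin (m + 1) → ℝ :=
  injP m p y + r • w

/-- The slice `Ω_ω ⊆ ℝ^{p+2}` of `Ω` at `ω`. -/
def sliceSet (m p : ℕ) (Ω : Set (Fin (m + 1) → ℝ)) (w : Fin (m + 1) → ℝ) :
    Set ((Fin (p + 1) → ℝ) × ℝ) := {z | pt m p w z.1 z.2 ∈ Ω}

/-- The restriction `f_ω` of `f` to the slice at `ω`, as a function on `ℝ^{p+2}`. -/
def sliceFun (m p : ℕ) (f : (Fin (m + 1) → ℝ) → A) (w : Fin (m + 1) → ℝ) :
    (Fin (p + 1) → ℝ) × ℝ → A := fun z => f (pt m p w z.1 z.2)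

/-- Partial derivative `∂_{x_s}` of a function on `ℝ^{m+1}`. -/
noncomputable def pdF (m : ℕ) (s : Fin (m + 1)) (f : (Fin (m + 1) → ℝ) → A)
    (x : Fin (m + 1) → ℝ) : A := fderiv ℝ f x (Pi.single s 1)

/-- Partial derivative `∂_{x_s}` of a function on `ℝ^{p+1}`. -/
noncomputable def pdP (p : ℕ) (s : Fin (p + 1)) (g : (Fin (p + 1) → ℝ) → A)
    (y : Fin (p + 1) → ℝ) : A := fderiv ℝ g y (Pi.single s 1)

/-- Partial derivative `∂_{x_s}` of a function on `ℝ^{p+2} = ℝ^{p+1} × ℝ`. -/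
noncomputable def pdSx (p : ℕ) (s : Fin (p + 1)) (G : (Fin (p + 1) → ℝ) × ℝ → A)
    (z : (Fin (p + 1) → ℝ) × ℝ) : A := fderiv ℝ G z (Pi.single s 1, 0)

/-- Partial derivative `∂_r` of a function on `ℝ^{p+2} = ℝ^{p+1} × ℝ`. -/
noncomputable def pdSr (p : ℕ) (G : (Fin (p + 1) → ℝ) × ℝ → A)
    (z : (Fin (p + 1) → ℝ) × ℝ) : A := fderiv ℝ G z (0, 1)

/-- Second partial derivative `∂_r²`. -/
noncomputable def pdSr2 (p : ℕ) (G : (Fin (p + 1) → ℝ) × ℝ → A)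
    (z : (Fin (p + 1) → ℝ) × ℝ) : A := pdSr p (pdSr p G) z

/-- The operator `Σ_{lo ≤ s ≤ hi} v_s ∂_{x_s}` on functions on `ℝ^{m+1}`.
`Dop v m 0 p` is `D_{x_p}`, `Dop v m (p+1) m` is `D_{x_q}`, `Dop v m 0 m` is `D_x`. -/
noncomputable def Dop (v : ℕ → A) (m lo hi : ℕ) (f : (Fin (m + 1) → ℝ) → A)
    (x : Fin (m + 1) → ℝ) : A :=
  ∑ s : Fin (m + 1), if lo ≤ (s : ℕ) ∧ (s : ℕ) ≤ hi then v (s : ℕ) * pdF m s f x else 0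

/-- The conjugate operator `∂_{x_0} - Σ_{1 ≤ s ≤ hi} v_s ∂_{x_s}` on functions on
`ℝ^{m+1}`; `Dbarop v m p` is `D̄_{x_p}`, `Dbarop v m m` is `D̄_x`. -/
noncomputable def Dbarop (v : ℕ → A) (m hi : ℕ) (f : (Fin (m + 1) → ℝ) → A)
    (x : Fin (m + 1) → ℝ) : A :=
  pdF m 0 f x -
    ∑ s : Fin (m + 1), if 1 ≤ (s : ℕ) ∧ (s : ℕ) ≤ hi then v (s : ℕ) * pdF m s f x else 0

/-- The operator `D_{x_p} = Σ_{s=0}^p v_s ∂_{x_s}` on functions on `ℝ^{p+1}`. -/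
noncomputable def DopP (v : ℕ → A) (p : ℕ) (g : (Fin (p + 1) → ℝ) → A)
    (y : Fin (p + 1) → ℝ) : A :=
  ∑ s : Fin (p + 1), v (s : ℕ) * pdP p s g y

/-- The operator `D̄_{x_p} = ∂_{x_0} - Σ_{s=1}^p v_s ∂_{x_s}` on functions on `ℝ^{p+1}`. -/
noncomputable def DbaropP (v : ℕ → A) (p : ℕ) (g : (Fin (p + 1) → ℝ) → A)
    (y : Fin (p + 1) → ℝ) : A :=
  pdP p 0 g y - ∑ s : Fin (p + 1), if 1 ≤ (s : ℕ) then v (s : ℕ) * pdP p s g y else 0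

/-- The operator `D_{x_p}` on functions on `ℝ^{p+2} = ℝ^{p+1} × ℝ`. -/
noncomputable def DopSx (v : ℕ → A) (p : ℕ) (G : (Fin (p + 1) → ℝ) × ℝ → A)
    (z : (Fin (p + 1) → ℝ) × ℝ) : A :=
  ∑ s : Fin (p + 1), v (s : ℕ) * pdSx p s G z

/-- The operator `D̄_{x_p}` on functions on `ℝ^{p+2} = ℝ^{p+1} × ℝ`. -/
noncomputable def DbaropSx (v : ℕ → A) (p : ℕ) (G : (Fin (p + 1) → ℝ) × ℝ → A)
    (z : (Fin (p + 1) → ℝ) × ℝ) : A :=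
  pdSx p 0 G z - ∑ s : Fin (p + 1), if 1 ≤ (s : ℕ) then v (s : ℕ) * pdSx p s G z else 0

/-- The Laplacian `Δ_x` on functions on `ℝ^{m+1}`. -/
noncomputable def lapF (m : ℕ) (f : (Fin (m + 1) → ℝ) → A)
    (x : Fin (m + 1) → ℝ) : A :=
  ∑ s : Fin (m + 1), pdF m s (pdF m s f) x

/-- The Laplacian `Δ_{x_p}` on functions on `ℝ^{p+1}`. -/
noncomputable def lapP (p : ℕ) (g : (Fin (p + 1) → ℝ) → A)
    (y : Fin (p + 1) → ℝ) : A :=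
  ∑ s : Fin (p + 1), pdP p s (pdP p s g) y

/-- Iterated Laplacian `Δ_x^k`. -/
noncomputable def lapIterF (m k : ℕ) (f : (Fin (m + 1) → ℝ) → A) :
    (Fin (m + 1) → ℝ) → A :=
  (fun g => lapF m g)^[k] f

/-- Iterated Laplacian `Δ_{x_p}^k`. -/
noncomputable def lapIterP (p k : ℕ) (g : (Fin (p + 1) → ℝ) → A) :
    (Fin (p + 1) → ℝ) → A :=
  (fun h => lapP p h)^[k] g

/-- The Laplacian `Δ_{x'} = Δ_{x_p} + ∂_r²` on functions on `ℝ^{p+2}`. -/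
noncomputable def lapSx (p : ℕ) (G : (Fin (p + 1) → ℝ) × ℝ → A)
    (z : (Fin (p + 1) → ℝ) × ℝ) : A :=
  (∑ s : Fin (p + 1), pdSx p s (pdSx p s G) z) + pdSr2 p G z

/-- The slice Cauchy-Riemann operator `D_ω = D_{x_p} + ω ∂_r` applied to a function
on `ℝ^{p+2}`, where `ω` is given in coordinates by `w`. -/
noncomputable def DomCR (v : ℕ → A) (m p : ℕ) (w : Fin (m + 1) → ℝ)
    (G : (Fin (p + 1) → ℝ) × ℝ → A) (z : (Fin (p + 1) → ℝ) × ℝ) : A :=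
  DopSx v p G z + emb v m w * pdSr p G z

/-- `f` is left generalized partial-slice monogenic (of type `(p, m-p)`) on `Ω`. -/
def GSM (v : ℕ → A) (m p : ℕ) (f : (Fin (m + 1) → ℝ) → A)
    (Ω : Set (Fin (m + 1) → ℝ)) : Prop :=
  ∀ w ∈ Sph v m p, ContDiffOn ℝ 1 (sliceFun m p f w) (sliceSet m p Ω w) ∧
    ∀ z ∈ sliceSet m p Ω w, DomCR v m p w (sliceFun m p f w) z = 0

/-- `Ω` is partially symmetric with respect to `ℝ^{p+1}`. -/
def PSym (v : ℕ → A) (m p : ℕ) (Ω : Set (Fin (m + 1) → ℝ)) : Prop :=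
  ∀ x ∈ Ω, ∀ w ∈ Sph v m p, xppart m p x + rad m p x • w ∈ Ω

/-- `Ω` is a slice domain: a domain meeting `ℝ^{p+1}` all of whose slices are
domains in `ℝ^{p+2}`. -/
def SliceDomain (v : ℕ → A) (m p : ℕ) (Ω : Set (Fin (m + 1) → ℝ)) : Prop :=
  IsOpen Ω ∧ IsConnected Ω ∧ (∃ x ∈ Ω, xqpart m p x = 0) ∧
    ∀ w ∈ Sph v m p, IsConnected (sliceSet m p Ω w)

/-- The reflection `(x_p, r) ↦ (x_p, -r)` of `ℝ^{p+2}`. -/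
def reflD (p : ℕ) (z : (Fin (p + 1) → ℝ) × ℝ) : (Fin (p + 1) → ℝ) × ℝ := (z.1, -z.2)

/-- The p-symmetric completion `Ω_D ⊆ M` of `D ⊆ ℝ^{p+2}`. -/
def OmegaD (v : ℕ → A) (m p : ℕ) (D : Set ((Fin (p + 1) → ℝ) × ℝ)) :
    Set (Fin (m + 1) → ℝ) :=
  {x | ∃ w ∈ Sph v m p, ∃ z ∈ D, x = pt m p w z.1 z.2}

/-- `(F₁, F₂)` satisfies the even-odd (stem function) conditions on `D`. -/
def IsStem (p : ℕ) (D : Set ((Fin (p + 1) → ℝ) × ℝ))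
    (F₁ F₂ : (Fin (p + 1) → ℝ) × ℝ → A) : Prop :=
  ∀ z ∈ D, F₁ (reflD p z) = F₁ z ∧ F₂ (reflD p z) = -F₂ z

/-- `f` is the generalized partial-slice function induced by the stem `(F₁, F₂)`:
`f(x_p + rω) = F₁(x_p, r) + ω F₂(x_p, r)`. -/
def Induced (v : ℕ → A) (m p : ℕ) (D : Set ((Fin (p + 1) → ℝ) × ℝ))
    (F₁ F₂ : (Fin (p + 1) → ℝ) × ℝ → A) (f : (Fin (m + 1) → ℝ) → A) : Prop :=
  ∀ w ∈ Sph v m p, ∀ z ∈ D, f (pt m p w z.1 z.2) = F₁ z + emb v m w * F₂ z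

/-- The generalized Cauchy-Riemann system for the stem `(F₁, F₂)` on `D`. -/
def StemCR (v : ℕ → A) (p : ℕ) (D : Set ((Fin (p + 1) → ℝ) × ℝ))
    (F₁ F₂ : (Fin (p + 1) → ℝ) × ℝ → A) : Prop :=
  ∀ z ∈ D, DopSx v p F₁ z - pdSr p F₂ z = 0 ∧ DbaropSx v p F₂ z + pdSr p F₁ z = 0

/-- `f` is generalized partial-slice regular on `Ω_D`. -/
def MemGSR (v : ℕ → A) (m p : ℕ) (D : Set ((Fin (p + 1) → ℝ) × ℝ))
    (f : (Fin (m + 1) → ℝ) → A) : Prop :=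
  ∃ F₁ F₂ : (Fin (p + 1) → ℝ) × ℝ → A, IsStem p D F₁ F₂ ∧
    ContDiffOn ℝ 1 F₁ D ∧ ContDiffOn ℝ 1 F₂ D ∧
    Induced v m p D F₁ F₂ f ∧ StemCR v p D F₁ F₂

/-- `f` is a generalized partial-slice function on `Ω`. -/
def MemGS (v : ℕ → A) (m p : ℕ) (Ω : Set (Fin (m + 1) → ℝ))
    (f : (Fin (m + 1) → ℝ) → A) : Prop :=
  ∃ F₁ F₂ : (Fin (p + 1) → ℝ) × ℝ → A,
    (∀ z : (Fin (p + 1) → ℝ) × ℝ, F₁ (reflD p z) = F₁ z ∧ F₂ (reflD p z) = -F₂ z) ∧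
    ∀ x ∈ Ω, f x = F₁ (projP m p x, rad m p x) +
      emb v m (normq m p x) * F₂ (projP m p x, rad m p x)

/-- Non-associative power: `a^n` with products taken from the right. -/
def apow (a : A) (n : ℕ) : A := (fun b => a * b)^[n] 1

/-- Partial even part `PE[f](x) = (f(x) + f(x_⋄))/2`. -/
noncomputable def PE (m p : ℕ) (f : (Fin (m + 1) → ℝ) → A)
    (x : Fin (m + 1) → ℝ) : A := (2 : ℝ)⁻¹ • (f x + f (reflP m p x))

/-- Partial odd part `PO[f](x) = (f(x) - f(x_⋄))/2`. -/
noncomputable def PO (m p : ℕ) (f : (Fin (m + 1) → ℝ) → A)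
    (x : Fin (m + 1) → ℝ) : A := (2 : ℝ)⁻¹ • (f x - f (reflP m p x))

/-- `Ω₀* = {x_p + x_q : x_p ∈ Ω₀, x_q ∈ ℝ^q}`. -/
def Omega0star (m p : ℕ) (Ω₀ : Set (Fin (p + 1) → ℝ)) : Set (Fin (m + 1) → ℝ) :=
  {x | projP m p x ∈ Ω₀}

/-- The spherical derivative `f'_s(x) = (1/2) x_q⁻¹ (f(x) - f(x_⋄))`
(using `x_q⁻¹ = -x_q/|x_q|²`). -/
noncomputable def sder (v : ℕ → A) (m p : ℕ) (f : (Fin (m + 1) → ℝ) → A)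
    (x : Fin (m + 1) → ℝ) : A :=
  -(((2 : ℝ) * rad m p x ^ 2)⁻¹) • (emb v m (xqpart m p x) * (f x - f (reflP m p x)))

/-- The spherical Dirac operator
`Γ f = -(1/2) Σ_{p+1 ≤ i,j ≤ m} v_i (v_j (L_{ij} f))`. -/
noncomputable def sphericalGamma (v : ℕ → A) (m p : ℕ) (f : (Fin (m + 1) → ℝ) → A)
    (x : Fin (m + 1) → ℝ) : A :=
  -((2 : ℝ)⁻¹) • ∑ i : Fin (m + 1), ∑ j : Fin (m + 1),
    if p < (i : ℕ) ∧ p < (j : ℕ) then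
      v (i : ℕ) * (v (j : ℕ) * (x i • pdF m j f x - x j • pdF m i f x)) else 0

/-- The slice Cauchy-Riemann operator `D_ω` applied to (the slice restriction of) a
function `f` on `M`, at the point `x` (with `ω = x_q/|x_q|`). -/
noncomputable def DomCRat (v : ℕ → A) (m p : ℕ) (f : (Fin (m + 1) → ℝ) → A)
    (x : Fin (m + 1) → ℝ) : A :=
  DomCR v m p (normq m p x) (sliceFun m p f (normq m p x)) (projP m p x, rad m p x)

/-- `f` is left monogenic on `Ω`: `f ∈ C¹` and `D_x f = 0`. -/
def Monogenic (v : ℕ → A) (m : ℕ) (f : (Fin (m + 1) → ℝ) → A)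
    (Ω : Set (Fin (m + 1) → ℝ)) : Prop :=
  ContDiffOn ℝ 1 f Ω ∧ ∀ x ∈ Ω, Dop v m 0 m f x = 0

/-- `f` is harmonic on `Ω`: `f ∈ C²` and `Δ_x f = 0`. -/
def Harmonic (m : ℕ) (f : (Fin (m + 1) → ℝ) → A)
    (Ω : Set (Fin (m + 1) → ℝ)) : Prop :=
  ContDiffOn ℝ 2 f Ω ∧ ∀ x ∈ Ω, lapF m f x = 0

/-- A family of functions converges normally (locally a summable uniform bound). -/
def NormallyConvOn {E F : Type*} [TopologicalSpace E] [NormedAddCommGroup F]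
    (u : ℕ → E → F) (s : Set E) : Prop :=
  ∀ x ∈ s, ∃ U ∈ nhds x, ∃ c : ℕ → ℝ, Summable c ∧ ∀ k : ℕ, ∀ y ∈ U, ‖u k y‖ ≤ c k

/-- The generalized partial-slice CK-extension
`CK[f₀](x) = Σ_k (r^{2k}/(2k)!)(-Δ_{x_p})^k f₀(x_p)
  + ω Σ_k (r^{2k+1}/(2k+1)!)(-Δ_{x_p})^k (D_{x_p} f₀)(x_p)`. -/
noncomputable def CKe (v : ℕ → A) (m p : ℕ) (f₀ : (Fin (p + 1) → ℝ) → A)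
    (x : Fin (m + 1) → ℝ) : A :=
  (∑' k : ℕ, (((-1 : ℝ) ^ k * rad m p x ^ (2 * k)) / (2 * k).factorial) •
      lapIterP p k f₀ (projP m p x)) +
  emb v m (normq m p x) *
    ∑' k : ℕ, (((-1 : ℝ) ^ k * rad m p x ^ (2 * k + 1)) / (2 * k + 1).factorial) •
      lapIterP p k (DopP v p f₀) (projP m p x)

/-- The coefficient `Γ(q/2)(-1)^k r^{2k} / (2^{2k} k! Γ(k + q/2))`. -/
noncomputable def hgckC (q k : ℕ) (r : ℝ) : ℝ :=
  (Real.Gamma ((q : ℝ) / 2) * (-1) ^ k * r ^ (2 * k)) /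
    (2 ^ (2 * k) * (k.factorial : ℝ) * Real.Gamma ((k : ℝ) + (q : ℝ) / 2))

/-- The coefficient `Γ(q/2)(-1)^k r^{2k} / (2^{2k+1} k! Γ(k + q/2 + 1))`. -/
noncomputable def gckC' (q k : ℕ) (r : ℝ) : ℝ :=
  (Real.Gamma ((q : ℝ) / 2) * (-1) ^ k * r ^ (2 * k)) /
    (2 ^ (2 * k + 1) * (k.factorial : ℝ) * Real.Gamma ((k : ℝ) + (q : ℝ) / 2 + 1))

/-- The coefficient `Γ(q/2 + 1)(-1)^k r^{2k} / (2^{2k} k! Γ(k + q/2 + 1))`. -/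
noncomputable def hgckC' (q k : ℕ) (r : ℝ) : ℝ :=
  (Real.Gamma ((q : ℝ) / 2 + 1) * (-1) ^ k * r ^ (2 * k)) /
    (2 ^ (2 * k) * (k.factorial : ℝ) * Real.Gamma ((k : ℝ) + (q : ℝ) / 2 + 1))

/-- The monogenic generalized CK-extension `GCK[A₀]`. -/
noncomputable def GCKe (v : ℕ → A) (m p : ℕ) (A₀ : (Fin (p + 1) → ℝ) → A)
    (x : Fin (m + 1) → ℝ) : A :=
  (∑' k : ℕ, hgckC (m - p) k (rad m p x) • lapIterP p k A₀ (projP m p x)) +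
  emb v m (xqpart m p x) *
    ∑' k : ℕ, gckC' (m - p) k (rad m p x) • lapIterP p k (DopP v p A₀) (projP m p x)

/-- The harmonic generalized CK-extension `HGCK[A₀, A₁]`. -/
noncomputable def HGCKe (v : ℕ → A) (m p : ℕ) (A₀ A₁ : (Fin (p + 1) → ℝ) → A)
    (x : Fin (m + 1) → ℝ) : A :=
  (∑' k : ℕ, hgckC (m - p) k (rad m p x) • lapIterP p k A₀ (projP m p x)) +
  emb v m (xqpart m p x) *
    ∑' k : ℕ, hgckC' (m - p) k (rad m p x) • lapIterP p k A₁ (projP m p x)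

/-- The operator `(1/r)∂_r`, extended to `r = 0` by its limit `∂_r²` (on even
functions). -/
noncomputable def T1 (p : ℕ) (G : (Fin (p + 1) → ℝ) × ℝ → A) :
    (Fin (p + 1) → ℝ) × ℝ → A := fun z =>
  if z.2 = 0 then pdSr2 p G z else (z.2)⁻¹ • pdSr p G z

/-- The operator `∂_r ∘ (1/r)`, extended to `r = 0` by its limit `(1/2)∂_r²` (on odd
functions). -/
noncomputable def T2 (p : ℕ) (G : (Fin (p + 1) → ℝ) × ℝ → A) :
    (Fin (p + 1) → ℝ) × ℝ → A := fun z =>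
  if z.2 = 0 then (2 : ℝ)⁻¹ • pdSr2 p G z
  else fderiv ℝ (fun t : ℝ => t⁻¹ • G (z.1, t)) z.2 1

/-- `C_q(k) = (q-1)(q-3)⋯(q-2k+1)`, `C_q(0) = 1`. -/
noncomputable def cq (q k : ℕ) : ℝ :=
  ∏ i ∈ Finset.range k, ((q : ℝ) - (2 * (i : ℝ) + 1))

/-- Double factorial. -/
def dfac : ℕ → ℕ
  | 0 => 1
  | 1 => 1
  | n + 2 => (n + 2) * dfac n

/-- The Fueter-Sce constant `γ_q = (-1)^{(q-1)/2} (q-1)!!/(q-2)!!`. -/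
noncomputable def gammaQ (q : ℕ) : ℝ :=
  (-1 : ℝ) ^ ((q - 1) / 2) * (dfac (q - 1) : ℝ) / (dfac (q - 2) : ℝ)

/-!
Moving `v_s` past a unit `ω` of `𝕊` conjugates it, `v_s (ω a) = ω (v̄_s a)`, so the slice equation
for `F₁ + ω F₂` splits into the two equations of a stem function; this gives `GSR ⊆ GSM`.

Conversely, `f` on the two half slices `±η` determines the stem function `F` that represents `f` on
the slice of `η`. On any other slice, `f_ω` and `F₁ + ω F₂` solve the same constant-coefficient
equation `(D + ω ∂_r) h = 0` and agree on the hyperplane `r = 0`. On a connected slice that meets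
the hyperplane this forces equality: the Clifford relations give a mean value property against a
radial bump, hence smoothness and Cauchy estimates, so a solution that is flat at a point vanishes
near it; and a solution vanishing on the hyperplane is flat there.

If `Ω` avoids the hyperplane, a function of `ω` alone is slice monogenic, and connectedness of `Ω`
forces `q ≥ 2`, so `𝕊` contains some `η ≠ ±ω₀`. The indicator of the single unit `ω₀` is then not of
the form `a + ω b`: vanishing at `±η` would give `a = b = 0`.
-/

section Bump

open MeasureTheory Metric

variable {E : Type*} [NormedAddCommGroup E]

/-- The standard radial bump function, supported in the closed unit ball. -/
noncomputable def radialBump (y : E) : ℝ := expNegInvGlue (1 - ‖y‖ ^ 2)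

/-- The compactly supported radial potential of the vector field `y ↦ radialBump y • y`. -/
noncomputable def radialPotential (y : E) : ℝ :=
  ∫ u in (1 : ℝ)..‖y‖ ^ 2, expNegInvGlue (1 - u) / 2

lemma radialBump_nonneg (y : E) : 0 ≤ radialBump y := expNegInvGlue.nonneg _

lemma radialBump_neg (y : E) : radialBump (-y) = radialBump y := by
  simp only [radialBump, norm_neg]

lemma radialBump_eq_zero {y : E} (hy : 1 ≤ ‖y‖) : radialBump y = 0 :=
  expNegInvGlue.zero_of_nonpos (by nlinarith)

lemma radialPotential_eq_zero {y : E} (hy : 1 ≤ ‖y‖) : radialPotential y = 0 := by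
  refine intervalIntegral.integral_zero_ae (Eventually.of_forall fun u hu ↦ ?_)
  rw [Set.uIoc_of_le (by nlinarith)] at hu
  rw [expNegInvGlue.zero_of_nonpos (by linarith [hu.1]), zero_div]

variable [InnerProductSpace ℝ E]

lemma contDiff_radialBump {n : ℕ∞} : ContDiff ℝ n (radialBump : E → ℝ) :=
  expNegInvGlue.contDiff.comp (contDiff_const.sub (contDiff_norm_sq ℝ))

lemma hasFDerivAt_radialPotential (y : E) :
    HasFDerivAt radialPotential (radialBump y • innerSL ℝ y) y := by
  have hcont : Continuous fun u ↦ expNegInvGlue (1 - u) / 2 :=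
    (expNegInvGlue.contDiff (n := 0).continuous.comp
      (continuous_const.sub continuous_id)).div_const 2
  have hprofile := intervalIntegral.integral_hasDerivAt_right (hcont.intervalIntegrable 1 (‖y‖ ^ 2))
    (hcont.stronglyMeasurableAtFilter _ _) hcont.continuousAt
  refine (hprofile.comp_hasFDerivAt y (hasStrictFDerivAt_norm_sq y).hasFDerivAt).congr_fderiv ?_
  rw [radialBump, ← Nat.cast_smul_eq_nsmul ℝ, smul_smul, Nat.cast_ofNat,
    div_mul_cancel₀ _ two_ne_zero]

lemma fderiv_radialPotential_apply (y v : E) :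
    fderiv ℝ radialPotential y v = radialBump y * inner ℝ y v := by
  rw [(hasFDerivAt_radialPotential y).fderiv, smul_apply, innerSL_apply_apply, smul_eq_mul]

lemma contDiff_radialPotential : ContDiff ℝ 2 (radialPotential : E → ℝ) := by
  rw [← one_add_one_eq_two, contDiff_succ_iff_fderiv]
  refine ⟨fun y ↦ (hasFDerivAt_radialPotential y).differentiableAt, by simp, ?_⟩
  rw [funext fun y : E ↦ (hasFDerivAt_radialPotential y).fderiv]
  exact (contDiff_radialBump (n := 1)).smul (innerSL ℝ).contDiff

variable [FiniteDimensional ℝ E]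

lemma hasCompactSupport_radialBump : HasCompactSupport (radialBump : E → ℝ) :=
  .intro (isCompact_closedBall 0 1) fun _ hy ↦
    radialBump_eq_zero (not_le.1 (mt mem_closedBall_zero_iff.2 hy)).le

lemma hasCompactSupport_radialPotential : HasCompactSupport (radialPotential : E → ℝ) :=
  .intro (isCompact_closedBall 0 1) fun _ hy ↦
    radialPotential_eq_zero (not_le.1 (mt mem_closedBall_zero_iff.2 hy)).le

lemma integral_radialBump_pos [MeasurableSpace E] [BorelSpace E] (μ : Measure E)
    [μ.IsAddHaarMeasure] : 0 < ∫ y, radialBump y ∂μ :=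
  (contDiff_radialBump (n := 0)).continuous.integral_pos_of_hasCompactSupport_nonneg_nonzero
    hasCompactSupport_radialBump radialBump_nonneg
    (show radialBump (0 : E) ≠ 0 from (expNegInvGlue.pos_of_pos (by simp)).ne')

end Bump

section Calculus

open MeasureTheory Metric

variable {E V : Type*} [NormedAddCommGroup E] [NormedSpace ℝ E]
  [NormedAddCommGroup V] [NormedSpace ℝ V]

lemma fderiv_fderiv_apply_comm {h : E → V} {x : E} (hh : ContDiffAt ℝ 2 h x) (a b : E) :
    fderiv ℝ (fun y ↦ fderiv ℝ h y a) x b = fderiv ℝ (fun y ↦ fderiv ℝ h y b) x a := by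
  have hd : DifferentiableAt ℝ (fderiv ℝ h) x :=
    (hh.fderiv_right (m := 1) (by norm_num)).differentiableAt one_ne_zero
  rw [fderiv_clm_apply hd (differentiableAt_const _),
    fderiv_clm_apply hd (differentiableAt_const _)]
  simpa using (hh.isSymmSndFDerivAt (by simp)).eq b a

lemma fderiv_comp_dilation (h : E → V) (x : E) (t : ℝ) (y : E) :
    fderiv ℝ (fun y ↦ h (x + t • y)) y = t • fderiv ℝ h (x + t • y) := by
  rw [fderiv_comp_smul (f := fun y ↦ h (x + y)), fderiv_comp_add_left]

lemma contDiff_dilation (x : E) (t : ℝ) {n : ℕ∞} : ContDiff ℝ n fun y ↦ x + t • y :=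
  contDiff_const.add (contDiff_const_smul t)

lemma exists_contDiff_eqOn_ball [FiniteDimensional ℝ E] {n : ℕ∞} {h : E → V} {x : E} {r R : ℝ}
    (hr : 0 < r) (hrR : r < R) (hh : ContDiffOn ℝ n h (ball x R)) :
    ∃ g : E → V, ContDiff ℝ n g ∧ Set.EqOn g h (ball x r) := by
  let χ : ContDiffBump x := ⟨r, (r + R) / 2, hr, by linarith⟩
  refine ⟨fun y ↦ χ y • h y, contDiff_iff_contDiffAt.2 fun y ↦ ?_, fun y hy ↦ ?_⟩
  · by_cases hy : y ∈ ball x R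
    · exact χ.contDiff.contDiffAt.smul (hh.contDiffAt (isOpen_ball.mem_nhds hy))
    · have hfar : y ∈ (tsupport χ)ᶜ := by
        rw [χ.tsupport_eq, Set.mem_compl_iff, mem_closedBall]
        exact fun hle ↦ hy (mem_ball.2 (hle.trans_lt (add_div_two_lt_right.2 hrR)))
      refine contDiffAt_const (c := (0 : V)) |>.congr_of_eventuallyEq ?_
      filter_upwards [(isClosed_tsupport χ).isOpen_compl.mem_nhds hfar] with z hz
      rw [image_eq_zero_of_notMem_tsupport hz, zero_smul]
  · simp [χ.one_of_mem_closedBall (ball_subset_closedBall hy)]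

variable [MeasurableSpace E] [BorelSpace E]

lemma integrable_fderiv_smul_fderiv (μ : Measure E) [IsFiniteMeasureOnCompacts μ]
    {u : E → ℝ} {g : E → V} (hu : ContDiff ℝ 1 u) (hsupp : HasCompactSupport u)
    (hg : ContDiff ℝ 1 g) (a b : E) :
    Integrable (fun y ↦ fderiv ℝ u y a • fderiv ℝ g y b) μ :=
  (((hu.continuous_fderiv one_ne_zero).clm_apply continuous_const).smul
      ((hg.continuous_fderiv one_ne_zero).clm_apply
        continuous_const)).integrable_of_hasCompactSupport
    (hsupp.fderiv_apply (𝕜 := ℝ) a).smul_right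

variable [FiniteDimensional ℝ E] (μ : Measure E) [μ.IsAddHaarMeasure]

lemma integral_fderiv_smul_fderiv_comm {u : E → ℝ} {g : E → V} (hu : ContDiff ℝ 2 u)
    (hsupp : HasCompactSupport u) (hg : ContDiff ℝ 1 g) (a b : E) :
    ∫ y, fderiv ℝ u y a • fderiv ℝ g y b ∂μ = ∫ y, fderiv ℝ u y b • fderiv ℝ g y a ∂μ := by
  have hu' (a : E) : ContDiff ℝ 1 fun y ↦ fderiv ℝ u y a :=
    (hu.fderiv_right (m := 1) (by norm_num)).clm_apply contDiff_const
  have hsupp' (a : E) : HasCompactSupport fun y ↦ fderiv ℝ u y a := hsupp.fderiv_apply (𝕜 := ℝ) a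
  have by_parts (a b : E) : ∫ y, fderiv ℝ u y a • fderiv ℝ g y b ∂μ =
      -∫ y, fderiv ℝ (fun y ↦ fderiv ℝ u y a) y b • g y ∂μ := by
    refine integral_smul_fderiv_eq_neg_fderiv_smul_of_integrable ?_
      (integrable_fderiv_smul_fderiv μ (hu.of_le one_le_two) hsupp hg a b) ?_
      (fun y _ ↦ (hu' a).differentiable one_ne_zero y)
      (fun y _ ↦ hg.differentiable one_ne_zero y)
    · exact ((((hu' a).continuous_fderiv one_ne_zero).clm_apply continuous_const).smul
        hg.continuous).integrable_of_hasCompactSupport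
          ((hsupp' a).fderiv_apply (𝕜 := ℝ) b).smul_right
    · exact ((hu' a).continuous.smul hg.continuous).integrable_of_hasCompactSupport
        (hsupp' a).smul_right
  simp only [by_parts a b, by_parts b a, fderiv_fderiv_apply_comm hu.contDiffAt a b]

lemma hasDerivAt_integral_smul_comp_dilation {φ : E → ℝ} {h : E → V} (hφ : Continuous φ)
    (hsupp : HasCompactSupport φ) (hh : ContDiff ℝ 1 h) (x : E) (t : ℝ) :
    HasDerivAt (fun t : ℝ ↦ ∫ y, φ y • h (x + t • y) ∂μ)
      (∫ y, φ y • fderiv ℝ h (x + t • y) y ∂μ) t := by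
  have hderiv : Continuous fun z : ℝ × E ↦ fderiv ℝ h (x + z.1 • z.2) z.2 :=
    ((hh.continuous_fderiv one_ne_zero).comp (by fun_prop)).clm_apply continuous_snd
  obtain ⟨K, hK⟩ := ((isCompact_closedBall t 1).prod hsupp).exists_bound_of_continuousOn
    hderiv.continuousOn
  have hcont (t : ℝ) : Continuous fun y ↦ φ y • h (x + t • y) :=
    hφ.smul (hh.continuous.comp (by fun_prop))
  refine (hasDerivAt_integral_of_dominated_loc_of_deriv_le (ball_mem_nhds t one_pos)
    (bound := fun y ↦ ‖φ y‖ * K)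
    (Eventually.of_forall fun t ↦ (hcont t).aestronglyMeasurable)
    ((hcont t).integrable_of_hasCompactSupport hsupp.smul_right)
    (F' := fun t y ↦ φ y • fderiv ℝ h (x + t • y) y)
    (hφ.smul (hderiv.comp (Continuous.prodMk_right t))).aestronglyMeasurable
    (Eventually.of_forall fun y s hs ↦ ?_)
    ((hφ.norm.integrable_of_hasCompactSupport hsupp.norm).mul_const K)
    (Eventually.of_forall fun y s _ ↦ ?_)).2
  · rw [norm_smul]
    by_cases hy : y ∈ tsupport φ
    · exact mul_le_mul_of_nonneg_left (hK (s, y) ⟨ball_subset_closedBall hs, hy⟩) (norm_nonneg _)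
    · simp [image_eq_zero_of_notMem_tsupport hy]
  · have hline : HasDerivAt (fun s : ℝ ↦ x + s • y) y s := by
      simpa using ((hasDerivAt_id s).smul_const y).const_add x
    exact ((hh.differentiable one_ne_zero _).hasFDerivAt.comp_hasDerivAt s hline).const_smul _

end Calculus

section Dirac

variable {ι E V : Type*} [Fintype ι] [NormedAddCommGroup E] [NormedSpace ℝ E]
  [NormedAddCommGroup V] [NormedSpace ℝ V]

/-- The Clifford relations `L̄ᵢ Lⱼ + L̄ⱼ Lᵢ = 2 δᵢⱼ`: they say that `(∑ L̄ᵢ ∂ᵢ) (∑ Lⱼ ∂ⱼ)` is the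
Laplacian. -/
def IsCliffordPair [DecidableEq ι] (L Lbar : ι → V →L[ℝ] V) : Prop :=
  ∀ i j x, Lbar i (L j x) + Lbar j (L i x) = if i = j then (2 : ℝ) • x else 0

/-- The first-order operator `∑ Lᵢ ∂ᵢ` with constant coefficients `L`, where `∂ᵢ` is the derivative
in the direction `b i`. -/
noncomputable def diracOp (b : ι → E) (L : ι → V →L[ℝ] V) (h : E → V) (x : E) : V :=
  ∑ i, L i (fderiv ℝ h x (b i))

/-- `h` is a `C¹` solution of `∑ Lᵢ ∂ᵢ h = 0` on `U`. -/
structure IsDiracSolutionOn (b : ι → E) (L : ι → V →L[ℝ] V) (h : E → V) (U : Set E) : Prop where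
  contDiffOn : ContDiffOn ℝ 1 h U
  diracOp_eq_zero : ∀ x ∈ U, diracOp b L h x = 0

/-- The derivative of `h` in the direction `v`, as an operator on functions that can be iterated. -/
noncomputable def dirDeriv (v : E) (h : E → V) : E → V := fun x ↦ fderiv ℝ h x v

/-- `h` vanishes at `z` together with all its iterated directional derivatives. -/
def IsFlatAt (h : E → V) (z : E) : Prop := ∀ (v : E) (k : ℕ), (dirDeriv v)^[k] h z = 0

variable {b : ι → E} {L : ι → V →L[ℝ] V} {h : E → V} {U W : Set E}

lemma diracOp_congr {g : E → V} {x : E} (hgh : g =ᶠ[𝓝 x] h) :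
    diracOp b L g x = diracOp b L h x := by
  simp only [diracOp, hgh.fderiv_eq]

lemma diracOp_comp_dilation (x : E) (t : ℝ) (y : E) :
    diracOp b L (fun y ↦ h (x + t • y)) y = t • diracOp b L h (x + t • y) := by
  simp only [diracOp, fderiv_comp_dilation, smul_apply, map_smul, Finset.smul_sum]

lemma diracOp_dirDeriv {x : E} (hh : ContDiffAt ℝ 2 h x) (v : E) :
    diracOp b L (dirDeriv v h) x = dirDeriv v (diracOp b L h) x := by
  have hderiv (a : E) : DifferentiableAt ℝ (fun y ↦ fderiv ℝ h y a) x :=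
    ((hh.fderiv_right (m := 1) (by norm_num)).differentiableAt one_ne_zero).clm_apply
      (differentiableAt_const a)
  have hsum : HasFDerivAt (diracOp b L h)
      (∑ i, (L i).comp (fderiv ℝ (fun y ↦ fderiv ℝ h y (b i)) x)) x :=
    .fun_sum fun i _ ↦ (L i).hasFDerivAt.comp x (hderiv (b i)).hasFDerivAt
  rw [dirDeriv, hsum.fderiv, diracOp, sum_apply]
  exact Finset.sum_congr rfl fun i _ ↦ congrArg (L i) (fderiv_fderiv_apply_comm hh v (b i))

lemma IsDiracSolutionOn.mono (hs : IsDiracSolutionOn b L h U) (hWU : W ⊆ U) :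
    IsDiracSolutionOn b L h W :=
  ⟨hs.contDiffOn.mono hWU, fun x hx ↦ hs.diracOp_eq_zero x (hWU hx)⟩

lemma IsDiracSolutionOn.differentiableAt (hs : IsDiracSolutionOn b L h U) (hU : IsOpen U) {x : E}
    (hx : x ∈ U) : DifferentiableAt ℝ h x :=
  (hs.contDiffOn.contDiffAt (hU.mem_nhds hx)).differentiableAt one_ne_zero

lemma IsDiracSolutionOn.sub {g : E → V} (hU : IsOpen U) (hs : IsDiracSolutionOn b L h U)
    (hg : IsDiracSolutionOn b L g U) : IsDiracSolutionOn b L (fun x ↦ h x - g x) U := by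
  refine ⟨hs.contDiffOn.sub hg.contDiffOn, fun x hx ↦ ?_⟩
  have hsub : diracOp b L (fun x ↦ h x - g x) x = diracOp b L h x - diracOp b L g x := by
    simp only [diracOp, fderiv_fun_sub (hs.differentiableAt hU hx) (hg.differentiableAt hU hx),
      sub_apply, map_sub, Finset.sum_sub_distrib]
  rw [hsub, hs.diracOp_eq_zero x hx, hg.diracOp_eq_zero x hx, sub_zero]

lemma IsDiracSolutionOn.comp_dilation (hs : IsDiracSolutionOn b L h U) {x : E} {t : ℝ}
    (hWU : Set.MapsTo (fun y ↦ x + t • y) W U) :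
    IsDiracSolutionOn b L (fun y ↦ h (x + t • y)) W :=
  ⟨hs.contDiffOn.comp (contDiff_dilation x t).contDiffOn hWU, fun y hy ↦ by
    rw [diracOp_comp_dilation, hs.diracOp_eq_zero _ (hWU hy), smul_zero]⟩

lemma IsDiracSolutionOn.comp_dilation_ball {x : E} {R : ℝ} (hR : 0 < R)
    (hs : IsDiracSolutionOn b L h (Metric.ball x R)) :
    IsDiracSolutionOn b L (fun y ↦ h (x + (R / 2) • y)) (Metric.ball 0 2) := by
  refine hs.comp_dilation fun y hy ↦ ?_
  rw [mem_ball_zero_iff] at hy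
  rw [mem_ball_iff_norm, add_sub_cancel_left, norm_smul, Real.norm_of_nonneg (by positivity)]
  nlinarith

lemma IsDiracSolutionOn.comp_equiv {E' : Type*} [NormedAddCommGroup E'] [NormedSpace ℝ E']
    (hs : IsDiracSolutionOn b L h U) (e : E' ≃L[ℝ] E) :
    IsDiracSolutionOn (fun i ↦ e.symm (b i)) L (h ∘ e) (e ⁻¹' U) := by
  refine ⟨hs.contDiffOn.comp e.contDiff.contDiffOn fun _ hx ↦ hx, fun x hx ↦ ?_⟩
  simpa only [diracOp, e.comp_right_fderiv, ContinuousLinearMap.comp_apply,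
    ContinuousLinearEquiv.coe_coe, e.apply_symm_apply] using hs.diracOp_eq_zero (e x) hx

lemma isFlatAt_of_eventually_eq_zero {z : E} (hz : ∀ᶠ y in 𝓝 z, h y = 0) : IsFlatAt h z := by
  intro v k
  refine Eventually.self_of_nhds (p := fun y ↦ (dirDeriv v)^[k] h y = 0) ?_
  induction k with
  | zero => exact hz
  | succ k ih =>
    filter_upwards [ih.eventually_nhds] with y hy
    have heq : (dirDeriv v)^[k] h =ᶠ[𝓝 y] fun _ ↦ 0 := hy
    rw [Function.iterate_succ_apply', dirDeriv, heq.fderiv_eq, fderiv_fun_const, Pi.zero_apply,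
      zero_apply]

end Dirac

section MeanValue

open MeasureTheory Metric

variable {ι E V : Type*} [Fintype ι] [DecidableEq ι] [NormedAddCommGroup V] [NormedSpace ℝ V]
  [CompleteSpace V] [NormedAddCommGroup E]

/-- The weak form of `Δ g = D̄ D g = 0`, needed because only one derivative of `g` is known to
exist. -/
lemma IsCliffordPair.sum_integral_fderiv_smul_fderiv_eq_zero [NormedSpace ℝ E]
    [FiniteDimensional ℝ E] [MeasurableSpace E] [BorelSpace E] (μ : Measure E) [μ.IsAddHaarMeasure]
    {b : ι → E} {L Lbar : ι → V →L[ℝ] V} (hL : IsCliffordPair L Lbar) {u : E → ℝ} {g : E → V}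
    (hu : ContDiff ℝ 2 u) (hsupp : HasCompactSupport u) (hg : ContDiff ℝ 1 g)
    (hDg : ∀ y ∈ tsupport u, diracOp b L g y = 0) :
    ∑ j, ∫ y, fderiv ℝ u y (b j) • fderiv ℝ g y (b j) ∂μ = 0 := by
  set I : ι → ι → V := fun j k ↦ ∫ y, fderiv ℝ u y (b j) • fderiv ℝ g y (b k) ∂μ with hI
  have hint (j k : ι) : Integrable (fun y ↦ fderiv ℝ u y (b j) • fderiv ℝ g y (b k)) μ :=
    integrable_fderiv_smul_fderiv μ (hu.of_le one_le_two) hsupp hg _ _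
  have hpair (j : ι) : ∑ k, L k (I j k) = 0 := by
    simp only [hI, ← (L _).integral_comp_comm (hint j _)]
    rw [← integral_finsetSum _ fun k _ ↦ (L k).integrable_comp (hint j k)]
    refine integral_eq_zero_of_ae (Eventually.of_forall fun y ↦ ?_)
    simp only [map_smul, ← Finset.smul_sum, Pi.zero_apply]
    by_cases hy : y ∈ tsupport u
    · exact (congrArg _ (hDg y hy)).trans (smul_zero _)
    · rw [image_eq_zero_of_notMem_tsupport (mt (tsupport_fderiv_subset ℝ ·) hy), zero_apply,
        zero_smul]
  have hright : ∑ j, ∑ k, Lbar j (L k (I j k)) = 0 := by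
    simp only [← map_sum, hpair, map_zero, Finset.sum_const_zero]
  have hleft : ∑ j, ∑ k, Lbar k (L j (I j k)) = 0 := by
    rw [Finset.sum_comm, ← hright]
    refine Finset.sum_congr rfl fun j _ ↦ Finset.sum_congr rfl fun k _ ↦ ?_
    rw [show I k j = I j k from integral_fderiv_smul_fderiv_comm μ hu hsupp hg _ _]
  have hdouble : (2 : ℝ) • ∑ j, I j j = 0 := by
    calc (2 : ℝ) • ∑ j, I j j = ∑ j, ∑ k, (Lbar j (L k (I j k)) + Lbar k (L j (I j k))) := by
          simp only [hL _ _ _, Finset.sum_ite_eq, Finset.mem_univ, if_true, Finset.smul_sum]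
      _ = 0 := by simp only [Finset.sum_add_distrib, hright, hleft, add_zero]
  exact (smul_eq_zero.1 hdouble).resolve_left two_ne_zero

variable [InnerProductSpace ℝ E] [FiniteDimensional ℝ E] [MeasurableSpace E] [BorelSpace E]
  (μ : Measure E) [μ.IsAddHaarMeasure] {b : OrthonormalBasis ι ℝ E} {L Lbar : ι → V →L[ℝ] V}

lemma IsCliffordPair.integral_radialBump_smul_fderiv_apply_self (hL : IsCliffordPair L Lbar)
    {g : E → V} (hg : ContDiff ℝ 1 g) (hDg : ∀ y ∈ closedBall (0 : E) 1, diracOp b L g y = 0) :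
    ∫ y, radialBump y • fderiv ℝ g y y ∂μ = 0 := by
  have hsupp : tsupport (radialPotential : E → ℝ) ⊆ closedBall 0 1 :=
    closure_minimal (fun y hy ↦ mem_closedBall_zero_iff.2
      (not_lt.1 fun hlt ↦ hy (radialPotential_eq_zero hlt.le))) isClosed_closedBall
  have hexpand (y : E) : radialBump y • fderiv ℝ g y y =
      ∑ j, fderiv ℝ radialPotential y (b j) • fderiv ℝ g y (b j) := by
    conv_lhs => rw [← b.sum_repr' y, map_sum, Finset.smul_sum, b.sum_repr']
    simp only [map_smul, smul_smul, fderiv_radialPotential_apply, real_inner_comm]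
  rw [integral_congr_ae (Eventually.of_forall hexpand), integral_finsetSum _ fun j _ ↦
    integrable_fderiv_smul_fderiv μ (contDiff_radialPotential.of_le one_le_two)
      hasCompactSupport_radialPotential hg _ _]
  exact hL.sum_integral_fderiv_smul_fderiv_eq_zero μ contDiff_radialPotential
    hasCompactSupport_radialPotential hg fun y hy ↦ hDg y (hsupp hy)

/-- The derivative of `t ↦ ∫ φ(y) h(x + ty) dy` is the pairing of `h(x + t ·)` with the potential
of `φ(y) y`, so that these averages do not depend on `t`. -/
lemma IsCliffordPair.integral_radialBump_smul_add (hL : IsCliffordPair L Lbar) {h : E → V}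
    (hh : ContDiff ℝ 1 h) {x : E} (hDh : ∀ y ∈ closedBall x 1, diracOp b L h y = 0) :
    ∫ y, radialBump y • h (x + y) ∂μ = (∫ y, radialBump (y : E) ∂μ) • h x := by
  have hderiv (t : ℝ) := hasDerivAt_integral_smul_comp_dilation μ
    (contDiff_radialBump (n := 0)).continuous hasCompactSupport_radialBump hh x t
  have hzero (t : ℝ) (ht : t ∈ Set.Ico (0 : ℝ) 1) :
      ∫ y, radialBump y • fderiv ℝ h (x + t • y) y ∂μ = 0 := by
    have hDt (y : E) (hy : y ∈ closedBall (0 : E) 1) : diracOp b L h (x + t • y) = 0 := by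
      refine hDh _ ?_
      rw [mem_closedBall_zero_iff] at hy
      rw [mem_closedBall_iff_norm, add_sub_cancel_left, norm_smul, Real.norm_of_nonneg ht.1]
      exact mul_le_one₀ ht.2.le (norm_nonneg y) hy
    rcases eq_or_ne t 0 with rfl | ht0
    · simpa only [zero_smul, add_zero, ContinuousLinearMap.fderiv] using
        hL.integral_radialBump_smul_fderiv_apply_self (b := b) μ (fderiv ℝ h x).contDiff
          fun y hy ↦ by
            simpa only [diracOp, ContinuousLinearMap.fderiv, zero_smul, add_zero] using hDt y hy
    · have hscaled := hL.integral_radialBump_smul_fderiv_apply_self (b := b) μ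
        (hh.comp (contDiff_dilation x t)) fun y hy ↦
          (diracOp_comp_dilation x t y).trans (by rw [hDt y hy, smul_zero])
      simp only [Function.comp_def, fderiv_comp_dilation, smul_apply, smul_comm _ t,
        integral_smul] at hscaled
      exact (smul_eq_zero.1 hscaled).resolve_left ht0
  have hconst := constant_of_has_deriv_right_zero
    (fun t _ ↦ (hderiv t).continuousAt.continuousWithinAt)
    (fun t ht ↦ hzero t ht ▸ (hderiv t).hasDerivWithinAt) 1 (Set.right_mem_Icc.2 zero_le_one)
  simpa only [one_smul, zero_smul, add_zero, integral_smul_const] using hconst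

end MeanValue

section CauchyEstimate

open MeasureTheory Metric

lemma norm_precompL_lsmul_apply_le {E V : Type*} [NormedAddCommGroup E] [NormedSpace ℝ E]
    [NormedAddCommGroup V] [NormedSpace ℝ V] (T : E →L[ℝ] ℝ) (v : V) :
    ‖(ContinuousLinearMap.lsmul ℝ ℝ : ℝ →L[ℝ] V →L[ℝ] V).precompL E T v‖ ≤ ‖T‖ * ‖v‖ := by
  refine ContinuousLinearMap.opNorm_le_bound _ (by positivity) fun e ↦ ?_
  rw [ContinuousLinearMap.precompL_apply, ContinuousLinearMap.lsmul_apply, norm_smul,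
    mul_right_comm]
  gcongr
  exact T.le_opNorm e

variable {ι E V : Type*} [Fintype ι] [DecidableEq ι] [NormedAddCommGroup E] [InnerProductSpace ℝ E]
  [FiniteDimensional ℝ E] [NormedAddCommGroup V] [NormedSpace ℝ V]
  {b : OrthonormalBasis ι ℝ E} {L Lbar : ι → V →L[ℝ] V} {h : E → V} {U : Set E}

lemma norm_convolution_fderiv_radialBump_le [MeasurableSpace E] [BorelSpace E] (μ : Measure E)
    [μ.IsAddHaarMeasure] {g : E → V} {M : ℝ} (hM : ∀ y ∈ closedBall (0 : E) 1, ‖g y‖ ≤ M) :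
    ‖convolution (fderiv ℝ radialBump) g ((ContinuousLinearMap.lsmul ℝ ℝ).precompL E) μ 0‖ ≤
      (∫ y, ‖fderiv ℝ radialBump (y : E)‖ ∂μ) * M := by
  have hcont : Continuous (fderiv ℝ (radialBump : E → ℝ)) :=
    (contDiff_radialBump (n := 1)).continuous_fderiv one_ne_zero
  have hsupp : HasCompactSupport (fderiv ℝ (radialBump : E → ℝ)) :=
    hasCompactSupport_radialBump.fderiv ℝ
  rw [convolution, ← integral_mul_const]
  refine norm_integral_le_of_norm_le
    ((hcont.integrable_of_hasCompactSupport hsupp).norm.mul_const M)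
    (Eventually.of_forall fun y ↦ ?_)
  by_cases hy : ‖y‖ ≤ 1
  · have hgy := hM (0 - y) (by simpa using hy)
    refine (norm_precompL_lsmul_apply_le _ _).trans ?_
    gcongr
  · have hflat : radialBump =ᶠ[𝓝 y] fun _ ↦ 0 := by
      filter_upwards [continuous_norm.continuousAt.eventually_const_le (not_le.1 hy)] with z hz
        using radialBump_eq_zero hz
    simp [hflat.fderiv_eq]

variable [CompleteSpace V]

lemma IsCliffordPair.convolution_radialBump [MeasurableSpace E] [BorelSpace E] (μ : Measure E)
    [μ.IsAddHaarMeasure] (hL : IsCliffordPair L Lbar) {g : E → V} (hg : ContDiff ℝ 1 g) {x : E}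
    (hDg : ∀ y ∈ closedBall x 1, diracOp b L g y = 0) :
    convolution radialBump g (ContinuousLinearMap.lsmul ℝ ℝ) μ x =
      (∫ y, radialBump (y : E) ∂μ) • g x := by
  rw [convolution, ← integral_neg_eq_self, ← hL.integral_radialBump_smul_add μ hg hDg]
  simp only [radialBump_neg, sub_neg_eq_add, ContinuousLinearMap.lsmul_apply]

lemma IsCliffordPair.exists_eventuallyEq_convolution [MeasurableSpace E] [BorelSpace E]
    (μ : Measure E) [μ.IsAddHaarMeasure] (hL : IsCliffordPair L Lbar)
    (hs : IsDiracSolutionOn b L h (ball 0 2)) :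
    ∃ g : E → V, ContDiff ℝ 1 g ∧ Set.EqOn g h (closedBall 0 1) ∧ h =ᶠ[𝓝 0] fun x ↦
      (∫ y, radialBump (y : E) ∂μ)⁻¹ •
        convolution radialBump g (ContinuousLinearMap.lsmul ℝ ℝ) μ x := by
  obtain ⟨g, hg, hgh⟩ := exists_contDiff_eqOn_ball (r := 3 / 2) (R := 2) (by norm_num)
    (by norm_num) hs.contDiffOn
  refine ⟨g, hg, hgh.mono (closedBall_subset_ball (by norm_num)), ?_⟩
  filter_upwards [ball_mem_nhds (0 : E) one_half_pos] with x hx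
  rw [mem_ball_zero_iff] at hx
  have hball : closedBall x 1 ⊆ ball 0 (3 / 2) :=
    closedBall_subset_ball' (by rw [dist_zero_right]; linarith)
  rw [hL.convolution_radialBump (b := b) μ hg fun y hy ↦ ?_,
    inv_smul_smul₀ (integral_radialBump_pos μ).ne', hgh (hball (mem_closedBall_self zero_le_one))]
  rw [diracOp_congr (hgh.eventuallyEq_of_mem (isOpen_ball.mem_nhds (hball hy))),
    hs.diracOp_eq_zero y (ball_subset_ball (by norm_num) (hball hy))]

lemma IsDiracSolutionOn.contDiffAt (hL : IsCliffordPair L Lbar) (hU : IsOpen U)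
    (hs : IsDiracSolutionOn b L h U) {x : E} (hx : x ∈ U) : ContDiffAt ℝ (⊤ : ℕ∞) h x := by
  borelize E
  obtain ⟨R, hR, hball⟩ := Metric.isOpen_iff.1 hU x hx
  obtain ⟨g, hg, -, hconv⟩ := hL.exists_eventuallyEq_convolution Measure.addHaar
    ((hs.mono hball).comp_dilation_ball hR)
  have hunit : ContDiffAt ℝ (⊤ : ℕ∞) (fun y ↦ h (x + (R / 2) • y)) 0 :=
    ((hasCompactSupport_radialBump.contDiff_convolution_left _ contDiff_radialBump
      hg.continuous.locallyIntegrable).const_smul _).contDiffAt.congr_of_eventuallyEq hconv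
  have hrescale : h = (fun y ↦ h (x + (R / 2) • y)) ∘ fun z ↦ (R / 2)⁻¹ • (z - x) := by
    funext z
    simp only [Function.comp_apply, smul_inv_smul₀ (half_pos hR).ne', add_sub_cancel]
  rw [hrescale]
  refine ContDiffAt.comp x ?_ (contDiffAt_id.sub contDiffAt_const |>.const_smul _)
  simpa only [id, sub_self, smul_zero] using hunit

variable (b) in
lemma IsCliffordPair.exists_norm_fderiv_le (hL : IsCliffordPair L Lbar) :
    ∃ K : ℝ, 0 < K ∧ ∀ (h : E → V) (x : E) (R M : ℝ), 0 < R → IsDiracSolutionOn b L h (ball x R) →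
      (∀ y ∈ ball x R, ‖h y‖ ≤ M) → ‖fderiv ℝ h x‖ ≤ K / R * M := by
  borelize E
  let μ : Measure E := Measure.addHaar
  set N := ∫ y : E, radialBump y ∂μ
  set J := ∫ y : E, ‖fderiv ℝ radialBump y‖ ∂μ
  have hN : 0 < N := integral_radialBump_pos μ
  have hJ : 0 ≤ J := integral_nonneg fun _ ↦ norm_nonneg _
  have hK : 0 < 2 * (N⁻¹ * J + 1) := by linarith [mul_nonneg (inv_pos.2 hN).le hJ]
  refine ⟨2 * (N⁻¹ * J + 1), hK, fun h x R M hR hs hM ↦ ?_⟩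
  have hM0 : 0 ≤ M := (norm_nonneg _).trans (hM x (mem_ball_self hR))
  obtain ⟨g, hg, hgh, hconv⟩ := hL.exists_eventuallyEq_convolution μ (hs.comp_dilation_ball hR)
  have hunit := ((hasCompactSupport_radialBump.hasFDerivAt_convolution_left _
    (contDiff_radialBump (n := 1)) hg.continuous.locallyIntegrable 0).const_smul N⁻¹
      |>.congr_of_eventuallyEq hconv).fderiv
  have hgM (y : E) (hy : y ∈ closedBall (0 : E) 1) : ‖g y‖ ≤ M := by
    rw [mem_closedBall_zero_iff] at hy
    rw [hgh (mem_closedBall_zero_iff.2 hy)]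
    refine hM _ ?_
    rw [mem_ball_iff_norm, add_sub_cancel_left, norm_smul, Real.norm_of_nonneg (by positivity)]
    nlinarith
  have hscaled : R / 2 * ‖fderiv ℝ h x‖ ≤ N⁻¹ * (J * M) := by
    rw [fderiv_comp_dilation, smul_zero, add_zero] at hunit
    rw [← Real.norm_of_nonneg (half_pos hR).le, ← norm_smul, hunit, norm_smul,
      Real.norm_of_nonneg (inv_pos.2 hN).le]
    exact mul_le_mul_of_nonneg_left (norm_convolution_fderiv_radialBump_le μ hgM)
      (inv_pos.2 hN).le
  rw [div_mul_eq_mul_div, le_div_iff₀ hR]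
  linarith

end CauchyEstimate

section Identity

open Metric

section Taylor

variable {E V : Type*} [NormedAddCommGroup E] [NormedSpace ℝ E] [NormedAddCommGroup V]
  [NormedSpace ℝ V] {h : E → V} {z v : E}

lemma iteratedDerivWithin_comp_segment
    (hdiff : ∀ k, ∀ t ∈ Set.Icc (0 : ℝ) 1, DifferentiableAt ℝ ((dirDeriv v)^[k] h) (z + t • v))
    (k : ℕ) {t : ℝ} (ht : t ∈ Set.Icc (0 : ℝ) 1) :
    iteratedDerivWithin k (fun t : ℝ ↦ h (z + t • v)) (Set.Icc 0 1) t =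
      (dirDeriv v)^[k] h (z + t • v) := by
  induction k generalizing t with
  | zero => rw [iteratedDerivWithin_zero, Function.iterate_zero, id]
  | succ k ih =>
    have hline : HasDerivAt (fun t : ℝ ↦ z + t • v) v t := by
      simpa using ((hasDerivAt_id t).smul_const v).const_add z
    rw [iteratedDerivWithin_succ, derivWithin_congr (fun s hs ↦ ih hs) (ih ht),
      Function.iterate_succ_apply', dirDeriv]
    exact ((hdiff k t ht).hasFDerivAt.comp_hasDerivAt t hline).hasDerivWithinAt.derivWithin
      (uniqueDiffOn_Icc_zero_one t ht)

lemma IsFlatAt.norm_apply_add_le (hflat : IsFlatAt h z)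
    (hdiff : ∀ k, ∀ t ∈ Set.Icc (0 : ℝ) 1, DifferentiableAt ℝ ((dirDeriv v)^[k] h) (z + t • v))
    {n : ℕ} {C : ℝ} (hC : ∀ t ∈ Set.Icc (0 : ℝ) 1, ‖(dirDeriv v)^[n + 1] h (z + t • v)‖ ≤ C) :
    ‖h (z + v)‖ ≤ C / n.factorial := by
  have hiter (k : ℕ) {t : ℝ} := iteratedDerivWithin_comp_segment hdiff k (t := t)
  have hsmooth : ContDiffOn ℝ (n + 1) (fun t : ℝ ↦ h (z + t • v)) (Set.Icc 0 1) := by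
    refine contDiffOn_of_differentiableOn_deriv (n := n + 1) fun k _ t ht ↦ ?_
    refine DifferentiableWithinAt.congr ?_ (fun s hs ↦ hiter k hs) (hiter k ht)
    exact ((hdiff k t ht).comp t (by fun_prop)).differentiableWithinAt
  have htaylor := taylor_mean_remainder_bound zero_le_one hsmooth (Set.right_mem_Icc.2 zero_le_one)
    fun t ht ↦ (congrArg _ (hiter (n + 1) ht)).trans_le (hC t ht)
  have hpoly : taylorWithinEval (fun t : ℝ ↦ h (z + t • v)) n (Set.Icc 0 1) 0 1 = 0 := by
    rw [taylor_within_apply]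
    refine Finset.sum_eq_zero fun k _ ↦ ?_
    rw [hiter k (Set.left_mem_Icc.2 zero_le_one), zero_smul, add_zero, hflat v k, smul_zero]
  simpa only [hpoly, one_smul, sub_zero, one_pow, mul_one] using htaylor

lemma fderiv_apply_eq_zero_of_eventually_eq_zero (hh : DifferentiableAt ℝ h z)
    (hzero : ∀ᶠ t : ℝ in 𝓝 0, h (z + t • v) = 0) : fderiv ℝ h z v = 0 := by
  have heq : (fun t : ℝ ↦ h (z + t • v)) =ᶠ[𝓝 0] fun _ ↦ 0 := hzero
  rw [← hh.lineDeriv_eq_fderiv, lineDeriv, heq.deriv_eq, deriv_const]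

end Taylor

variable {ι E V : Type*} [Fintype ι] [DecidableEq ι] [NormedAddCommGroup E] [InnerProductSpace ℝ E]
  [NormedAddCommGroup V] [NormedSpace ℝ V]
  {b : OrthonormalBasis ι ℝ E} {L Lbar : ι → V →L[ℝ] V} {h : E → V} {U : Set E}

lemma IsDiracSolutionOn.fderiv_eq_zero_of_hyperplane (hL : IsCliffordPair L Lbar) (hU : IsOpen U)
    (hs : IsDiracSolutionOn b L h U) {i : ι} (hzero : ∀ y ∈ U, b.repr y i = 0 → h y = 0) {y : E}
    (hy : y ∈ U) (hyi : b.repr y i = 0) : fderiv ℝ h y = 0 := by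
  have htangent (j : ι) (hj : j ≠ i) : fderiv ℝ h y (b j) = 0 := by
    refine fderiv_apply_eq_zero_of_eventually_eq_zero (hs.differentiableAt hU hy) ?_
    have hline : Tendsto (fun t : ℝ ↦ y + t • b j) (𝓝 0) (𝓝 y) :=
      Continuous.tendsto' (by fun_prop) _ _ (by simp)
    filter_upwards [hline (hU.mem_nhds hy)] with t ht
    refine hzero _ ht ?_
    simp [hyi, hj.symm]
  have hnormal : fderiv ℝ h y (b i) = 0 := by
    have hdirac := hs.diracOp_eq_zero y hy
    rw [diracOp, Fintype.sum_eq_single i fun j hj ↦ by rw [htangent j hj, map_zero]] at hdirac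
    have hcliff := hL i i (fderiv ℝ h y (b i))
    rw [hdirac, map_zero, add_zero, if_pos rfl] at hcliff
    exact (smul_eq_zero.1 hcliff.symm).resolve_left two_ne_zero
  refine ContinuousLinearMap.coe_injective (b.toBasis.ext fun j ↦ ?_)
  rcases eq_or_ne j i with rfl | hj
  · simpa using hnormal
  · simpa using htangent j hj

variable [FiniteDimensional ℝ E] [CompleteSpace V]

lemma IsDiracSolutionOn.isDiracSolutionOn_dirDeriv (hL : IsCliffordPair L Lbar) (hU : IsOpen U)
    (hs : IsDiracSolutionOn b L h U) (v : E) : IsDiracSolutionOn b L (dirDeriv v h) U := by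
  have hsmooth {x : E} (hx : x ∈ U) : ContDiffAt ℝ 2 h x :=
    (hs.contDiffAt hL hU hx).of_le (WithTop.coe_le_coe.2 le_top)
  refine ⟨fun x hx ↦ (((hsmooth hx).fderiv_right (m := 1) (by norm_num)).clm_apply
    contDiffAt_const).contDiffWithinAt, fun x hx ↦ ?_⟩
  have hzero : diracOp b L h =ᶠ[𝓝 x] fun _ ↦ 0 := by
    filter_upwards [hU.mem_nhds hx] with y hy using hs.diracOp_eq_zero y hy
  rw [diracOp_dirDeriv (hsmooth hx), dirDeriv, hzero.fderiv_eq, fderiv_fun_const,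
    Pi.zero_apply, zero_apply]

lemma IsDiracSolutionOn.iterate_dirDeriv (hL : IsCliffordPair L Lbar) (hU : IsOpen U)
    (hs : IsDiracSolutionOn b L h U) (v : E) (k : ℕ) :
    IsDiracSolutionOn b L ((dirDeriv v)^[k] h) U := by
  induction k with
  | zero => exact hs
  | succ k ih =>
    exact Function.iterate_succ_apply' (dirDeriv v) k h ▸ ih.isDiracSolutionOn_dirDeriv hL hU v

variable (b) in
/-- Cauchy's estimate is applied `k` times, on balls of radius `R / (2k)`. -/
lemma IsCliffordPair.exists_norm_iterate_dirDeriv_le (hL : IsCliffordPair L Lbar) :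
    ∃ K : ℝ, 0 < K ∧ ∀ (h : E → V) (z v : E) (R M : ℝ) (k : ℕ), 0 < R →
      IsDiracSolutionOn b L h (ball z R) → (∀ y ∈ ball z R, ‖h y‖ ≤ M) →
        ∀ y ∈ ball z (R / 2), ‖(dirDeriv v)^[k] h y‖ ≤ M * (K * ‖v‖ / R * k) ^ k := by
  obtain ⟨K, hK, hcauchy⟩ := hL.exists_norm_fderiv_le b
  refine ⟨2 * K, by positivity, fun h z v R M k hR hs hM y hy ↦ ?_⟩
  have : 0 ≤ M := (norm_nonneg _).trans (hM z (mem_ball_self hR))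
  have hiter (ε : ℝ) (hε : 0 < ε) (j : ℕ) :
      ∀ y ∈ ball z (R - j * ε), ‖(dirDeriv v)^[j] h y‖ ≤ M * (K * ‖v‖ / ε) ^ j := by
    induction j with
    | zero => simpa using hM
    | succ j ih =>
      intro y hy
      rw [mem_ball] at hy
      push_cast at hy
      have hj : ball y ε ⊆ ball z (R - j * ε) := ball_subset_ball' (by linarith)
      have hR' : ball y ε ⊆ ball z R := ball_subset_ball' (by nlinarith [j.cast_nonneg (α := ℝ)])
      have hfderiv := hcauchy _ y ε _ hε ((hs.iterate_dirDeriv hL isOpen_ball v j).mono hR')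
        fun w hw ↦ ih w (hj hw)
      rw [Function.iterate_succ_apply']
      calc ‖dirDeriv v ((dirDeriv v)^[j] h) y‖
          ≤ K / ε * (M * (K * ‖v‖ / ε) ^ j) * ‖v‖ := ContinuousLinearMap.le_of_opNorm_le _ hfderiv v
        _ = M * (K * ‖v‖ / ε) ^ (j + 1) := by ring
  rcases k.eq_zero_or_pos with rfl | hk
  · simpa using hM y (ball_subset_ball (half_le_self hR.le) hy)
  · have : (0 : ℝ) < k := Nat.cast_pos.2 hk
    convert hiter (R / (2 * k)) (by positivity) k y _ using 3
    · field_simp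
    · convert hy using 2
      field_simp
      norm_num

/-- The `n`-th Taylor remainder on the ball of radius `c R` is at most `M n (K c n)ⁿ / n!`, and
`nⁿ / n! ≤ eⁿ`. -/
lemma IsDiracSolutionOn.eq_zero_of_isFlatAt_of_norm_le {K R M : ℝ} {z y : E} (hK : 0 < K)
    (hR : 0 < R) (hL : IsCliffordPair L Lbar) (hs : IsDiracSolutionOn b L h (ball z R))
    (hflat : IsFlatAt h z)
    (hbound : ∀ (v : E) (k : ℕ), ∀ y ∈ ball z (R / 2),
      ‖(dirDeriv v)^[k] h y‖ ≤ M * (K * ‖v‖ / R * k) ^ k)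
    (hyR : ‖y - z‖ < R / 2) (hyK : K * ‖y - z‖ / R * Real.exp 1 < 1) : h y = 0 := by
  set v := y - z
  set ρ := K * ‖v‖ / R * Real.exp 1
  have hM0 : 0 ≤ M := by
    simpa using (norm_nonneg _).trans (hbound 0 0 z (mem_ball_self (half_pos hR)))
  have hseg (t : ℝ) (ht : t ∈ Set.Icc (0 : ℝ) 1) : z + t • v ∈ ball z (R / 2) := by
    rw [mem_ball_iff_norm, add_sub_cancel_left, norm_smul, Real.norm_of_nonneg ht.1]
    nlinarith [ht.1, ht.2, norm_nonneg v]
  have htaylor (n : ℕ) : ‖h y‖ ≤ M * ((n + 1 : ℕ) * ρ ^ (n + 1)) := by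
    have hremainder := hflat.norm_apply_add_le (v := v) (fun k t ht ↦
      (hs.iterate_dirDeriv hL isOpen_ball v k).differentiableAt isOpen_ball
        (ball_subset_ball (half_le_self hR.le) (hseg t ht)))
      fun t ht ↦ hbound v (n + 1) _ (hseg t ht)
    have hexp : ((n + 1 : ℕ) : ℝ) ^ (n + 1) / (n + 1).factorial ≤ Real.exp 1 ^ (n + 1) := by
      rw [← Real.exp_nat_mul, mul_one]
      exact Real.pow_div_factorial_le_exp _ (Nat.cast_nonneg _) _
    rw [add_sub_cancel] at hremainder
    calc ‖h y‖ ≤ M * (K * ‖v‖ / R * (n + 1 : ℕ)) ^ (n + 1) / n.factorial := hremainder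
      _ = M * (K * ‖v‖ / R) ^ (n + 1) * (n + 1 : ℕ) *
          (((n + 1 : ℕ) : ℝ) ^ (n + 1) / (n + 1).factorial) := by
        rw [Nat.factorial_succ, mul_pow]
        push_cast
        field_simp
      _ ≤ M * (K * ‖v‖ / R) ^ (n + 1) * (n + 1 : ℕ) * Real.exp 1 ^ (n + 1) := by gcongr
      _ = M * ((n + 1 : ℕ) * ρ ^ (n + 1)) := by rw [mul_pow]; ring
  have hlim := ((tendsto_self_mul_const_pow_of_lt_one (by positivity) hyK).comp
    (tendsto_add_atTop_nat 1)).const_mul M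
  rw [mul_zero] at hlim
  exact norm_le_zero_iff.1 (ge_of_tendsto' hlim htaylor)

variable (b) in
lemma IsCliffordPair.exists_eq_zero_on_ball_of_isFlatAt (hL : IsCliffordPair L Lbar) :
    ∃ c : ℝ, 0 < c ∧ ∀ (h : E → V) (U : Set E) (z : E) (R : ℝ), IsDiracSolutionOn b L h U →
      0 < R → closedBall z R ⊆ U → IsFlatAt h z → ∀ y ∈ ball z (c * R), h y = 0 := by
  obtain ⟨K, hK, hderiv⟩ := hL.exists_norm_iterate_dirDeriv_le b
  refine ⟨min (1 / 2) (1 / (K * Real.exp 1)), by positivity, fun h U z R hs hR hU hflat y hy ↦ ?_⟩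
  obtain ⟨M, hM⟩ := (isCompact_closedBall z R).exists_bound_of_continuousOn
    (hs.contDiffOn.continuousOn.mono hU)
  have hsball := hs.mono (ball_subset_closedBall.trans hU)
  rw [mem_ball_iff_norm, min_mul_of_nonneg _ _ hR.le, lt_min_iff] at hy
  have hbound (v : E) (k : ℕ) := hderiv h z v R M k hR hsball
    fun y hy ↦ hM y (ball_subset_closedBall hy)
  refine hsball.eq_zero_of_isFlatAt_of_norm_le hK hR hL hflat hbound (by linarith) ?_
  have hyK := hy.2
  rw [div_mul_eq_mul_div, one_mul, lt_div_iff₀ (by positivity)] at hyK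
  rw [div_mul_eq_mul_div, div_lt_one hR]
  linarith

lemma IsDiracSolutionOn.eq_zero_of_isFlatAt (hL : IsCliffordPair L Lbar) (hU : IsOpen U)
    (hUc : IsPreconnected U) (hs : IsDiracSolutionOn b L h U) {z : E} (hz : z ∈ U)
    (hflat : IsFlatAt h z) : ∀ y ∈ U, h y = 0 := by
  obtain ⟨c, hc, hvanish⟩ := hL.exists_eq_zero_on_ball_of_isFlatAt b
  have hsub : U ⊆ {x | ∀ᶠ y in 𝓝 x, h y = 0} := by
    refine hUc.subset_of_closure_inter_subset isOpen_setOfPred_eventually_nhds ⟨z, hz, ?_⟩ ?_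
    · obtain ⟨R, hR, hball⟩ := nhds_basis_closedBall.mem_iff.1 (hU.mem_nhds hz)
      filter_upwards [ball_mem_nhds z (mul_pos hc hR)] using hvanish h U z R hs hR hball hflat
    · rintro x ⟨hxcl, hxU⟩
      obtain ⟨R, hR, hball⟩ := nhds_basis_closedBall.mem_iff.1 (hU.mem_nhds hxU)
      obtain ⟨w, hw, hxw⟩ := mem_closure_iff.1 hxcl (min (R / 2) (c * (R / 2))) (by positivity)
      rw [lt_min_iff] at hxw
      have hballw : closedBall w (R / 2) ⊆ closedBall x R :=
        closedBall_subset_closedBall' (by rw [dist_comm]; linarith)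
      filter_upwards [isOpen_ball.mem_nhds (mem_ball.2 hxw.2)] using
        hvanish h U w (R / 2) hs (half_pos hR) (hballw.trans hball)
          (isFlatAt_of_eventually_eq_zero hw)
  exact fun y hy ↦ (hsub hy).self_of_nhds

lemma IsDiracSolutionOn.isFlatAt_of_hyperplane (hL : IsCliffordPair L Lbar) (hU : IsOpen U)
    (hs : IsDiracSolutionOn b L h U) {i : ι} (hzero : ∀ y ∈ U, b.repr y i = 0 → h y = 0) {y : E}
    (hy : y ∈ U) (hyi : b.repr y i = 0) : IsFlatAt h y := by
  intro v k
  induction k generalizing y with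
  | zero => exact hzero y hy hyi
  | succ k ih =>
    have hfderiv := (hs.iterate_dirDeriv hL hU v k).fderiv_eq_zero_of_hyperplane hL hU
      (fun _ ↦ ih) hy hyi
    rw [Function.iterate_succ_apply', dirDeriv, hfderiv, zero_apply]

lemma IsDiracSolutionOn.eqOn_of_eqOn_hyperplane {F : Type*} [NormedAddCommGroup F]
    [NormedSpace ℝ F] (b : Module.Basis ι ℝ F) (hL : IsCliffordPair L Lbar) {f g : F → V}
    {D : Set F} (hD : IsOpen D) (hDc : IsPreconnected D) (hf : IsDiracSolutionOn b L f D)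
    (hg : IsDiracSolutionOn b L g D) {i : ι} (hfg : Set.EqOn f g (D ∩ {z | b.repr z i = 0}))
    (hne : (D ∩ {z | b.repr z i = 0}).Nonempty) : Set.EqOn f g D := by
  let e : EuclideanSpace ℝ ι ≃L[ℝ] F :=
    (EuclideanSpace.equiv ι ℝ).trans b.equivFunL.symm
  have hrepr (y : EuclideanSpace ℝ ι) (i : ι) : b.repr (e y) i = y i :=
    congrFun (b.equivFun.apply_symm_apply (EuclideanSpace.equiv ι ℝ y)) i
  have he : (fun i ↦ e.symm (b i)) = EuclideanSpace.basisFun ι ℝ := by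
    refine funext fun i ↦ e.symm_apply_eq.2 (b.repr.injective (Finsupp.ext fun j ↦ ?_))
    rw [hrepr, b.repr_self]
    simp [Finsupp.single_apply, eq_comm]
  have hsol := (hf.sub hD hg).comp_equiv e
  rw [he] at hsol
  obtain ⟨z, hzD, hzi⟩ := hne
  have hflat := hsol.isFlatAt_of_hyperplane hL (hD.preimage e.continuous) (i := i)
    (fun y hy hyi ↦ sub_eq_zero.2 (hfg ⟨hy, (hrepr y i).trans hyi⟩))
    (y := e.symm z) (by simpa using hzD) (by
      rwa [EuclideanSpace.basisFun_repr, ← hrepr, e.apply_symm_apply])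
  have hzero := hsol.eq_zero_of_isFlatAt hL (hD.preimage e.continuous)
    (e.toHomeomorph.isPreconnected_preimage.2 hDc) (by simpa using hzD) hflat
  exact fun y hy ↦ sub_eq_zero.1 (by simpa using hzero (e.symm y) (by simpa using hy))

end Identity

section CliffordFamilies

variable {ι κ V : Type*} [Fintype ι] [DecidableEq ι] [NormedAddCommGroup V] [NormedSpace ℝ V]
  {L Lbar : ι → V →L[ℝ] V}

lemma IsCliffordPair.polarization (hL : IsCliffordPair L Lbar) (x y : ι → ℝ) (a : V) :
    (∑ i, x i • Lbar i) ((∑ j, y j • L j) a) + (∑ i, y i • Lbar i) ((∑ j, x j • L j) a) =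
      (2 * x ⬝ᵥ y) • a := by
  have expand (x y : ι → ℝ) : (∑ i, x i • Lbar i) ((∑ j, y j • L j) a) =
      ∑ j, ∑ i, (y j * x i) • Lbar i (L j a) := by
    simp only [sum_apply, smul_apply, map_sum, map_smul, Finset.smul_sum, smul_smul]
  rw [expand x y, expand y x, Finset.sum_comm]
  simp only [← Finset.sum_add_distrib, mul_comm (y _), ← smul_add, hL _ _ a, smul_ite, smul_zero,
    Finset.sum_ite_eq, Finset.mem_univ, if_true, dotProduct, Finset.mul_sum, Finset.sum_smul,
    smul_smul, mul_comm _ (2 : ℝ)]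

lemma IsCliffordPair.of_orthonormal [DecidableEq κ] (hL : IsCliffordPair L Lbar)
    {d : κ → ι → ℝ} (hd : ∀ j k, d j ⬝ᵥ d k = if j = k then 1 else 0) :
    IsCliffordPair (fun k ↦ ∑ i, d k i • L i) (fun k ↦ ∑ i, d k i • Lbar i) := by
  intro j k a
  rw [hL.polarization, hd, mul_ite, mul_one, mul_zero, ite_smul, zero_smul]

end CliffordFamilies

section Emb

variable {V : Type*} [NormedAddCommGroup V] [NormedSpace ℝ V] {v : ℕ → V} {m : ℕ}

lemma emb_neg (x : Fin (m + 1) → ℝ) : emb v m (-x) = -emb v m x := by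
  simp [emb]

lemma emb_single (s : Fin (m + 1)) : emb v m (Pi.single s 1) = v s := by
  simp [emb, Pi.single_apply]

end Emb

section Algebra

variable {conj : A → A}

namespace IsAltStarAlg

variable (H : IsAltStarAlg A conj)
include H

/-- The multiplication of `A` as a bilinear map. -/
def mulLin : A →ₗ[ℝ] A →ₗ[ℝ] A :=
  LinearMap.mk₂ ℝ (· * ·) H.add_mul' H.smul_mul' H.mul_add' H.mul_smul'

/-- The involution of `A` as a linear map. -/
def conjLin : A →ₗ[ℝ] A where
  toFun := conj
  map_add' := H.conj_add
  map_smul' := H.conj_smul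

/-- Left multiplication on the finite-dimensional algebra `A` as a continuous operator. -/
noncomputable def lmul : A →ₗ[ℝ] A →L[ℝ] A :=
  haveI := H.finDim
  LinearMap.toContinuousLinearMap.toLinearMap ∘ₗ H.mulLin

lemma lmul_apply (a b : A) : H.lmul a b = a * b := rfl

lemma mul_zero (a : A) : a * 0 = 0 := map_zero (H.mulLin a)

lemma zero_mul (a : A) : 0 * a = 0 := H.mulLin.map_zero₂ a

lemma mul_neg (a b : A) : a * -b = -(a * b) := map_neg (H.mulLin a) b

lemma neg_mul (a b : A) : -a * b = -(a * b) := H.mulLin.map_neg₂ a b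

lemma mul_sum {κ : Type*} (s : Finset κ) (a : A) (f : κ → A) :
    a * ∑ i ∈ s, f i = ∑ i ∈ s, a * f i := map_sum (H.mulLin a) f s

lemma mul_mul_add_mul_mul (a b c : A) : a * (b * c) + b * (a * c) = (a * b + b * a) * c := by
  have h := H.alt_left (a + b) c
  simp only [H.add_mul', H.mul_add', H.alt_left a c, H.alt_left b c] at h ⊢
  linear_combination (norm := module) h

lemma one_ne_zero : (1 : A) ≠ 0 := by
  intro h
  have := subsingleton_of_forall_eq (0 : A) fun a ↦ by rw [← H.one_mul' a, h, H.zero_mul]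
  simpa [Module.finrank_zero_of_subsingleton] using H.one_lt_finrank

end IsAltStarAlg

variable {v : ℕ → A} {m p : ℕ}

lemma IsAltStarAlg.lmul_emb (H : IsAltStarAlg A conj) (x : Fin (m + 1) → ℝ) :
    H.lmul (emb v m x) = ∑ s, x s • H.lmul (v s) := by
  simp only [emb, map_sum, map_smul]

lemma IsAltStarAlg.lmul_conj_emb (H : IsAltStarAlg A conj) (x : Fin (m + 1) → ℝ) :
    H.lmul (conj (emb v m x)) = ∑ s, x s • H.lmul (conj (v s)) := by
  change H.lmul (H.conjLin (emb v m x)) = ∑ s, x s • H.lmul (H.conjLin (v s))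
  simp only [emb, map_sum, map_smul]

namespace IsHypBasis

variable (hv : IsHypBasis A conj v m)
include hv

lemma conj_eq_neg {s : ℕ} (h₁ : 1 ≤ s) (hm : s ≤ m) : conj (v s) = -v s :=
  eq_neg_of_add_eq_zero_right (hv.trace_zero s h₁ hm)

variable (H : IsAltStarAlg A conj)
include H

lemma mul_self {s : ℕ} (h₁ : 1 ≤ s) (hm : s ≤ m) : v s * v s = -1 := by
  rw [← hv.norm_one s h₁ hm, hv.conj_eq_neg h₁ hm, H.mul_neg, neg_neg]

lemma isCliffordPair :
    IsCliffordPair (fun s : Fin (m + 1) ↦ H.lmul (v s)) (fun s ↦ H.lmul (conj (v s))) := by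
  intro s t a
  simp only [H.lmul_apply]
  rcases Nat.eq_zero_or_pos s with hs | hs <;> rcases Nat.eq_zero_or_pos t with ht | ht
  · rw [if_pos (Fin.ext (hs.trans ht.symm)), hs, ht, hv.v_zero, H.conj_one, H.one_mul', H.one_mul',
      two_smul]
  · rw [if_neg (by rintro rfl; omega), hs, hv.v_zero, H.conj_one, H.one_mul', H.one_mul',
      hv.conj_eq_neg ht t.is_le, H.neg_mul, add_neg_cancel]
  · rw [if_neg (by rintro rfl; omega), ht, hv.v_zero, H.conj_one, H.one_mul', H.one_mul',
      hv.conj_eq_neg hs s.is_le, H.neg_mul, neg_add_cancel]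
  · rw [hv.conj_eq_neg hs s.is_le, hv.conj_eq_neg ht t.is_le, H.neg_mul, H.neg_mul, ← neg_add,
      H.mul_mul_add_mul_mul]
    split_ifs with hst
    · rw [hst, hv.mul_self H ht t.is_le, H.add_mul', H.neg_mul, H.one_mul', two_smul, neg_add,
        neg_neg]
    · rw [hv.anticomm s t hs s.is_le ht t.is_le (Fin.val_ne_of_ne hst), neg_add_cancel, H.zero_mul,
        neg_zero]

lemma conj_emb_mul_emb_mul_add (x y : Fin (m + 1) → ℝ) (a : A) :
    conj (emb v m x) * (emb v m y * a) + conj (emb v m y) * (emb v m x * a) =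
      (2 * x ⬝ᵥ y) • a := by
  have h := (hv.isCliffordPair H).polarization x y a
  rwa [← H.lmul_emb, ← H.lmul_emb, ← H.lmul_conj_emb, ← H.lmul_conj_emb] at h

lemma conj_emb_of_zero {w : Fin (m + 1) → ℝ} (hw : w 0 = 0) :
    conj (emb v m w) = -emb v m w := by
  change H.conjLin (emb v m w) = -emb v m w
  simp only [emb, map_sum, map_smul, ← Finset.sum_neg_distrib]
  refine Finset.sum_congr rfl fun s _ ↦ ?_
  rcases eq_or_ne s 0 with rfl | hs
  · simp [hw]
  · rw [← smul_neg, ← hv.conj_eq_neg (Nat.pos_of_ne_zero (Fin.val_ne_of_ne hs)) s.is_le]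
    rfl

lemma emb_mul_emb_mul_of_zero {w : Fin (m + 1) → ℝ} (hw : w 0 = 0) (a : A) :
    emb v m w * (emb v m w * a) = -((w ⬝ᵥ w) • a) := by
  have h := hv.conj_emb_mul_emb_mul_add H w w a
  rw [hv.conj_emb_of_zero H hw, H.neg_mul, ← two_smul ℝ, mul_smul] at h
  exact neg_eq_iff_eq_neg.1 (smul_right_injective A two_ne_zero h)

lemma mem_Sph_iff {w : Fin (m + 1) → ℝ} :
    w ∈ Sph v m p ↔ (∀ s : Fin (m + 1), (s : ℕ) ≤ p → w s = 0) ∧ w ⬝ᵥ w = 1 := by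
  refine and_congr_right fun hw ↦ ?_
  have hsq := hv.emb_mul_emb_mul_of_zero H (hw 0 (Nat.zero_le p)) 1
  rw [H.mul_one'] at hsq
  rw [hsq, neg_inj]
  exact ⟨fun h ↦ smul_left_injective ℝ H.one_ne_zero (h.trans (one_smul ℝ 1).symm),
    fun h ↦ by rw [h, one_smul]⟩

lemma single_mem_Sph {s : Fin (m + 1)} (hs : p < s) : Pi.single s 1 ∈ Sph v m p := by
  refine (hv.mem_Sph_iff H).2 ⟨fun t ht ↦ Pi.single_eq_of_ne ?_ 1, by simp⟩
  rintro rfl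
  exact hs.not_ge ht

end IsHypBasis

section Sphere

variable (H : IsAltStarAlg A conj) {w : Fin (m + 1) → ℝ} (hw : w ∈ Sph v m p)
include H hw

lemma neg_mem_Sph : -w ∈ Sph v m p :=
  ⟨fun s hs ↦ by simp [hw.1 s hs], by rw [emb_neg, H.neg_mul, H.mul_neg, neg_neg, hw.2]⟩

lemma emb_mul_emb_mul (a : A) : emb v m w * (emb v m w * a) = -a := by
  rw [H.alt_left, hw.2, H.neg_mul, H.one_mul']

lemma eq_zero_of_add_emb_mul_eq_zero {a b : A} (hpos : a + emb v m w * b = 0)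
    (hneg : a + emb v m (-w) * b = 0) : a = 0 ∧ b = 0 := by
  rw [emb_neg, H.neg_mul] at hneg
  have ha : a = 0 := by
    have h : (2 : ℝ) • a = 0 := by linear_combination (norm := module) hpos + hneg
    exact (smul_eq_zero.1 h).resolve_left two_ne_zero
  rw [ha, zero_add] at hpos
  refine ⟨ha, ?_⟩
  rw [← neg_eq_zero, ← emb_mul_emb_mul H hw, hpos, H.mul_zero]

variable (hv : IsHypBasis A conj v m) (hp : p < m)
include hv hp

lemma mul_emb_mul {s : ℕ} (hs : s ≤ p) (a : A) :
    v s * (emb v m w * a) = emb v m w * (conj (v s) * a) := by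
  rcases Nat.eq_zero_or_pos s with rfl | h₁
  · rw [hv.v_zero, H.conj_one, H.one_mul', H.one_mul']
  · have h := hv.conj_emb_mul_emb_mul_add H (Pi.single ⟨s, by omega⟩ 1) w a
    rw [emb_single, single_one_dotProduct, hw.1 _ hs, hv.conj_emb_of_zero H (hw.1 0 p.zero_le),
      mul_zero, zero_smul, hv.conj_eq_neg h₁ (by omega), H.neg_mul, H.neg_mul] at h
    rw [hv.conj_eq_neg h₁ (by omega), H.neg_mul, H.mul_neg]
    linear_combination (norm := module) -h

end Sphere

end Algebra

section Geometry

variable {m p : ℕ} {w : Fin (m + 1) → ℝ}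

lemma reflD_reflD (z : (Fin (p + 1) → ℝ) × ℝ) : reflD p (reflD p z) = z := by
  simp only [reflD, neg_neg]

lemma exists_mem_snd_pos {D : Set ((Fin (p + 1) → ℝ) × ℝ)} (hDrefl : ∀ z ∈ D, reflD p z ∈ D)
    (hne : D.Nonempty) (hD₀ : ∀ z ∈ D, z.2 ≠ 0) : ∃ z ∈ D, 0 < z.2 := by
  obtain ⟨z, hz⟩ := hne
  rcases (hD₀ z hz).lt_or_gt with hr | hr
  · exact ⟨reflD p z, hDrefl z hz, neg_pos.2 hr⟩
  · exact ⟨z, hz, hr⟩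

lemma continuous_projP : Continuous (projP m p) := by
  refine continuous_pi fun s ↦ ?_
  unfold projP
  split_ifs <;> fun_prop

lemma continuous_rad : Continuous (rad m p) := by
  refine Real.continuous_sqrt.comp (continuous_finsetSum _ fun s _ ↦ Continuous.pow ?_ 2)
  unfold xqpart
  split_ifs <;> fun_prop

lemma rad_eq_zero {x : Fin (m + 1) → ℝ} (hx : xqpart m p x = 0) : rad m p x = 0 := by
  simp [rad, hx]

lemma pt_neg (y : Fin (p + 1) → ℝ) (r : ℝ) : pt m p (-w) y r = pt m p w y (-r) := by
  simp only [pt, smul_neg, neg_smul]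

lemma sliceFun_neg {V : Type*} (f : (Fin (m + 1) → ℝ) → V) (z : (Fin (p + 1) → ℝ) × ℝ) :
    sliceFun m p f (-w) z = sliceFun m p f w (reflD p z) := by
  simp only [sliceFun, reflD, pt_neg]

lemma pt_apply_of_le (hw : ∀ s : Fin (m + 1), (s : ℕ) ≤ p → w s = 0) (y : Fin (p + 1) → ℝ) (r : ℝ)
    {s : Fin (m + 1)} (hs : (s : ℕ) ≤ p) : pt m p w y r s = y ⟨s, Nat.lt_succ_of_le hs⟩ := by
  simp [pt, injP, hw s hs, Nat.lt_succ_of_le hs]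

lemma pt_apply_of_lt (y : Fin (p + 1) → ℝ) (r : ℝ) {s : Fin (m + 1)} (hs : p < s) :
    pt m p w y r s = r * w s := by
  simp [pt, injP, hs.not_ge]

lemma projP_pt (hp : p < m) (hw : ∀ s : Fin (m + 1), (s : ℕ) ≤ p → w s = 0)
    (y : Fin (p + 1) → ℝ) (r : ℝ) : projP m p (pt m p w y r) = y := by
  funext s
  rw [projP, dif_pos (by omega), pt_apply_of_le hw y r (s := ⟨s, by omega⟩) s.is_le]

lemma xqpart_pt (hw : ∀ s : Fin (m + 1), (s : ℕ) ≤ p → w s = 0) (y : Fin (p + 1) → ℝ) (r : ℝ) :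
    xqpart m p (pt m p w y r) = r • w := by
  funext s
  rw [xqpart, Pi.smul_apply, smul_eq_mul]
  split_ifs with hs
  · rw [hw s hs, mul_zero]
  · exact pt_apply_of_lt y r (not_le.1 hs)

end Geometry

section SliceGeometry

variable {conj : A → A} (H : IsAltStarAlg A conj) {v : ℕ → A} {m p : ℕ}
  (hv : IsHypBasis A conj v m) {D : Set ((Fin (p + 1) → ℝ) × ℝ)}
include H hv

section Point

variable {w : Fin (m + 1) → ℝ} (hw : w ∈ Sph v m p) (y : Fin (p + 1) → ℝ) {r : ℝ}
include hw

lemma rad_pt (r : ℝ) : rad m p (pt m p w y r) = |r| := by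
  have hww := ((hv.mem_Sph_iff H).1 hw).2
  simp only [dotProduct, ← sq] at hww
  simp only [rad, xqpart_pt hw.1, Pi.smul_apply, smul_eq_mul, mul_pow, ← Finset.mul_sum, hww,
    mul_one, Real.sqrt_sq_eq_abs]

lemma normq_pt_of_pos (hr : 0 < r) : normq m p (pt m p w y r) = w := by
  rw [normq, rad_pt H hv hw, xqpart_pt hw.1, abs_of_pos hr, inv_smul_smul₀ hr.ne']

lemma normq_pt_of_neg (hr : r < 0) : normq m p (pt m p w y r) = -w := by
  rw [normq, rad_pt H hv hw, xqpart_pt hw.1, abs_of_neg hr, inv_neg, neg_smul,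
    inv_smul_smul₀ hr.ne]

end Point

variable (hp : p < m)
include hp

lemma exists_mem_Sph : ∃ w, w ∈ Sph v m p :=
  ⟨_, hv.single_mem_Sph H (s := Fin.last m) hp⟩

lemma sliceSet_OmegaD (hDrefl : ∀ z ∈ D, reflD p z ∈ D) {w : Fin (m + 1) → ℝ}
    (hw : w ∈ Sph v m p) : sliceSet m p (OmegaD v m p D) w = D := by
  refine Set.Subset.antisymm ?_ fun z hz ↦ ⟨w, hw, z, hz, rfl⟩
  rintro ⟨y, r⟩ ⟨w', hw', ⟨y', r'⟩, hz', h⟩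
  have hy := congrArg (projP m p) h
  have hr := congrArg (rad m p) h
  simp only [projP_pt hp hw.1, projP_pt hp hw'.1] at hy
  simp only [rad_pt H hv hw, rad_pt H hv hw'] at hr
  subst hy
  rcases abs_eq_abs.1 hr with rfl | rfl
  · exact hz'
  · exact hDrefl _ hz'

lemma OmegaD_inter_nonempty_iff :
    (OmegaD v m p D ∩ {x | xqpart m p x = 0}).Nonempty ↔ ∃ z ∈ D, z.2 = 0 := by
  constructor
  · rintro ⟨_, ⟨w, hw, z, hz, rfl⟩, hx⟩
    exact ⟨z, hz, abs_eq_zero.1 ((rad_pt H hv hw z.1 z.2).symm.trans (rad_eq_zero hx))⟩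
  · rintro ⟨z, hz, hz₀⟩
    obtain ⟨w, hw⟩ := exists_mem_Sph H hv hp
    refine ⟨_, ⟨w, hw, z, hz, rfl⟩, ?_⟩
    rw [Set.mem_ofPred_eq, xqpart_pt hw.1, hz₀, zero_smul]

lemma image_OmegaD (hDrefl : ∀ z ∈ D, reflD p z ∈ D) :
    (fun x ↦ (projP m p x, rad m p x)) '' OmegaD v m p D = D ∩ {z | 0 ≤ z.2} := by
  ext z
  constructor
  · rintro ⟨_, ⟨w, hw, z, hz, rfl⟩, rfl⟩
    simp only [projP_pt hp hw.1, rad_pt H hv hw]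
    refine ⟨?_, abs_nonneg z.2⟩
    rcases abs_choice z.2 with h | h <;> rw [h]
    exacts [hz, hDrefl z hz]
  · rintro ⟨hz, hz₀⟩
    obtain ⟨w, hw⟩ := exists_mem_Sph H hv hp
    refine ⟨pt m p w z.1 z.2, ⟨w, hw, z, hz, rfl⟩, ?_⟩
    exact Prod.ext (projP_pt hp hw.1 _ _) ((rad_pt H hv hw _ _).trans (abs_of_nonneg hz₀))

lemma isPreconnected_of_OmegaD (hDrefl : ∀ z ∈ D, reflD p z ∈ D)
    (hΩ : IsPreconnected (OmegaD v m p D)) {z₀ : (Fin (p + 1) → ℝ) × ℝ} (hz₀ : z₀ ∈ D)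
    (hr₀ : z₀.2 = 0) : IsPreconnected D := by
  have hupper : IsPreconnected (D ∩ {z | 0 ≤ z.2}) := by
    rw [← image_OmegaD H hv hp hDrefl]
    exact hΩ.image _ (continuous_projP.prodMk continuous_rad).continuousOn
  have hcont : Continuous (reflD p) := by
    unfold reflD
    fun_prop
  have hfix : reflD p z₀ = z₀ := Prod.ext rfl (by rw [reflD, hr₀, neg_zero])
  have hD : D = D ∩ {z | 0 ≤ z.2} ∪ reflD p '' (D ∩ {z | 0 ≤ z.2}) := by
    refine Set.Subset.antisymm (fun z hz ↦ ?_) ?_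
    · rcases le_total 0 z.2 with h | h
      · exact .inl ⟨hz, h⟩
      · exact .inr ⟨reflD p z, ⟨hDrefl z hz, neg_nonneg.2 h⟩, reflD_reflD z⟩
    · rintro _ (hz | ⟨z, hz, rfl⟩)
      exacts [hz.1, hDrefl z hz.1]
  rw [hD]
  exact hupper.union z₀ ⟨hz₀, hr₀.ge⟩ ⟨z₀, ⟨hz₀, hr₀.ge⟩, hfix⟩ (hupper.image _ hcont.continuousOn)

end SliceGeometry

section SliceOperator

/-- `g` is a `C¹` solution on `U ⊆ ℝ^{p+2}` of the slice equation `D_ω g = 0`, where `w` are the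
coordinates of `ω`. -/
structure IsSliceMonogenicOn (v : ℕ → A) (m p : ℕ) (w : Fin (m + 1) → ℝ)
    (g : (Fin (p + 1) → ℝ) × ℝ → A) (U : Set ((Fin (p + 1) → ℝ) × ℝ)) : Prop where
  contDiffOn : ContDiffOn ℝ 1 g U
  domCR_eq_zero : ∀ z ∈ U, DomCR v m p w g z = 0

section Congr

variable {V : Type*} [NormedAddCommGroup V] [NormedSpace ℝ V] [Mul V] {v : ℕ → V} {m p : ℕ}
  {w : Fin (m + 1) → ℝ} {f g : (Fin (p + 1) → ℝ) × ℝ → V} {U : Set ((Fin (p + 1) → ℝ) × ℝ)}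

lemma IsSliceMonogenicOn.congr (hU : IsOpen U) (hg : IsSliceMonogenicOn v m p w g U)
    (hfg : Set.EqOn f g U) :
    IsSliceMonogenicOn v m p w f U := by
  refine ⟨hg.contDiffOn.congr hfg, fun z hz ↦ ?_⟩
  have hderiv : fderiv ℝ f z = fderiv ℝ g z :=
    (hfg.eventuallyEq_of_mem (hU.mem_nhds hz)).fderiv_eq
  simpa only [DomCR, DopSx, pdSx, pdSr, hderiv] using hg.domCR_eq_zero z hz

end Congr

/-- The standard basis of `ℝ^{p+2} = ℝ^{p+1} × ℝ`. -/
noncomputable def sliceBasis (p : ℕ) :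
    Module.Basis (Fin (p + 1) ⊕ Unit) ℝ ((Fin (p + 1) → ℝ) × ℝ) :=
  (Pi.basisFun ℝ (Fin (p + 1))).prod (Module.Basis.singleton Unit ℝ)

/-- The images `v₀, …, v_p, ω` (in coordinates) of `sliceBasis p` under `(x_p, r) ↦ x_p + r ω`. -/
def sliceDir {m p : ℕ} (hp : p < m) (w : Fin (m + 1) → ℝ) :
    Fin (p + 1) ⊕ Unit → Fin (m + 1) → ℝ :=
  Sum.elim (fun s ↦ Pi.single (Fin.castLE (Nat.succ_le_succ hp.le) s) 1) fun _ ↦ w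

variable {conj : A → A} (H : IsAltStarAlg A conj) {v : ℕ → A} {m p : ℕ}
  {w : Fin (m + 1) → ℝ} {f g : (Fin (p + 1) → ℝ) × ℝ → A} {U : Set ((Fin (p + 1) → ℝ) × ℝ)}

lemma DomCR_eq_diracOp (hp : p < m) (z : (Fin (p + 1) → ℝ) × ℝ) :
    DomCR v m p w g z =
      diracOp (sliceBasis p) (fun i ↦ H.lmul (emb v m (sliceDir hp w i))) g z := by
  simp [DomCR, DopSx, pdSx, pdSr, diracOp, sliceBasis, sliceDir, emb_single, H.lmul_apply]

lemma isCliffordPair_slice (hv : IsHypBasis A conj v m) (hp : p < m) (hw : w ∈ Sph v m p) :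
    IsCliffordPair (fun i ↦ H.lmul (emb v m (sliceDir hp w i)))
      (fun i ↦ H.lmul (conj (emb v m (sliceDir hp w i)))) := by
  have horth (i j) : sliceDir hp w i ⬝ᵥ sliceDir hp w j = if i = j then 1 else 0 := by
    rcases i with s | _ <;> rcases j with t | _
    · simp [sliceDir, Pi.single_apply, eq_comm]
    · simp [sliceDir, hw.1 (s.castLE _) s.is_le]
    · simp [sliceDir, hw.1 (t.castLE _) t.is_le]
    · simp [sliceDir, ((hv.mem_Sph_iff H).1 hw).2]
  have h := (hv.isCliffordPair H).of_orthonormal horth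
  simpa only [← H.lmul_emb, ← H.lmul_conj_emb] using h

namespace IsSliceMonogenicOn

lemma isDiracSolutionOn (hg : IsSliceMonogenicOn v m p w g U) (hp : p < m) :
    IsDiracSolutionOn (sliceBasis p) (fun i ↦ H.lmul (emb v m (sliceDir hp w i))) g U :=
  ⟨hg.contDiffOn, fun z hz ↦ (DomCR_eq_diracOp H hp z).symm.trans (hg.domCR_eq_zero z hz)⟩

include H in
lemma eqOn_of_eqOn_real (hv : IsHypBasis A conj v m) (hp : p < m) (hw : w ∈ Sph v m p)
    (hU : IsOpen U) (hUc : IsPreconnected U) (hf : IsSliceMonogenicOn v m p w f U)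
    (hg : IsSliceMonogenicOn v m p w g U) (hfg : ∀ z ∈ U, z.2 = 0 → f z = g z)
    (hne : ∃ z ∈ U, z.2 = 0) : Set.EqOn f g U := by
  have := H.finDim
  have : CompleteSpace A := FiniteDimensional.complete ℝ A
  have hr (z : (Fin (p + 1) → ℝ) × ℝ) : (sliceBasis p).repr z (.inr ()) = z.2 := by
    simp [sliceBasis]
  refine (hf.isDiracSolutionOn H hp).eqOn_of_eqOn_hyperplane (sliceBasis p)
    (isCliffordPair_slice H hv hp hw) hU hUc (hg.isDiracSolutionOn H hp) (i := .inr ()) ?_ ?_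
  · exact fun z ⟨hz, hz₀⟩ ↦ hfg z hz ((hr z).symm.trans hz₀)
  · exact hne.imp fun z ⟨hz, hz₀⟩ ↦ ⟨hz, (hr z).trans hz₀⟩

end IsSliceMonogenicOn

end SliceOperator

section Stem

variable {conj : A → A} (H : IsAltStarAlg A conj) {v : ℕ → A} {m p : ℕ}
  (hv : IsHypBasis A conj v m) (hp : p < m) {w : Fin (m + 1) → ℝ}
  {D : Set ((Fin (p + 1) → ℝ) × ℝ)} {F₁ F₂ : (Fin (p + 1) → ℝ) × ℝ → A}
  {f : (Fin (m + 1) → ℝ) → A}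
include H hv hp

lemma DbaropSx_eq_sum_conj (z : (Fin (p + 1) → ℝ) × ℝ) :
    DbaropSx v p F₁ z = ∑ s : Fin (p + 1), conj (v s) * pdSx p s F₁ z := by
  have hsucc (s : Fin p) (a : A) : conj (v (s + 1)) * a = -(v (s + 1) * a) := by
    rw [hv.conj_eq_neg (by omega) (by omega), H.neg_mul]
  simp only [DbaropSx, Fin.sum_univ_succ, Fin.val_zero, Fin.val_succ, hv.v_zero, H.conj_one,
    H.one_mul', hsucc, Nat.le_add_left, nonpos_iff_eq_zero, one_ne_zero, if_true, if_false,
    zero_add, Finset.sum_neg_distrib, sub_eq_add_neg]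

lemma DomCR_add_emb_mul (hw : w ∈ Sph v m p) {z : (Fin (p + 1) → ℝ) × ℝ}
    (h₁ : DifferentiableAt ℝ F₁ z) (h₂ : DifferentiableAt ℝ F₂ z) :
    DomCR v m p w (fun z ↦ F₁ z + emb v m w * F₂ z) z =
      (DopSx v p F₁ z - pdSr p F₂ z) + emb v m w * (DbaropSx v p F₂ z + pdSr p F₁ z) := by
  have hderiv : fderiv ℝ (fun z ↦ F₁ z + emb v m w * F₂ z) z =
      fderiv ℝ F₁ z + (H.lmul (emb v m w)).comp (fderiv ℝ F₂ z) :=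
    (h₁.hasFDerivAt.add ((H.lmul (emb v m w)).hasFDerivAt.comp z h₂.hasFDerivAt)).fderiv
  have hcomm (s : Fin (p + 1)) (a : A) :
      v s * (emb v m w * a) = emb v m w * (conj (v s) * a) :=
    mul_emb_mul H hw hv hp s.is_le a
  rw [DbaropSx_eq_sum_conj H hv hp]
  simp only [DomCR, DopSx, pdSx, pdSr, hderiv, add_apply, ContinuousLinearMap.comp_apply,
    H.lmul_apply, H.mul_add', Finset.sum_add_distrib, hcomm, emb_mul_emb_mul H hw, H.mul_sum]
  abel

lemma StemCR.isSliceMonogenicOn (hD : IsOpen D) (h₁ : ContDiffOn ℝ 1 F₁ D)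
    (h₂ : ContDiffOn ℝ 1 F₂ D) (hF : StemCR v p D F₁ F₂) (hw : w ∈ Sph v m p) :
    IsSliceMonogenicOn v m p w (fun z ↦ F₁ z + emb v m w * F₂ z) D := by
  refine ⟨h₁.add ((H.lmul (emb v m w)).contDiff.comp_contDiffOn h₂), fun z hz ↦ ?_⟩
  have hzD := hD.mem_nhds hz
  rw [DomCR_add_emb_mul H hv hp hw ((h₁.contDiffAt hzD).differentiableAt one_ne_zero)
    ((h₂.contDiffAt hzD).differentiableAt one_ne_zero), (hF z hz).1, (hF z hz).2, H.mul_zero,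
    add_zero]

lemma stemCR_of_isSliceMonogenicOn (hD : IsOpen D) (h₁ : ContDiffOn ℝ 1 F₁ D)
    (h₂ : ContDiffOn ℝ 1 F₂ D) (hw : w ∈ Sph v m p)
    (hpos : IsSliceMonogenicOn v m p w (fun z ↦ F₁ z + emb v m w * F₂ z) D)
    (hneg : IsSliceMonogenicOn v m p (-w) (fun z ↦ F₁ z + emb v m (-w) * F₂ z) D) :
    StemCR v p D F₁ F₂ := by
  intro z hz
  have hd₁ := (h₁.contDiffAt (hD.mem_nhds hz)).differentiableAt one_ne_zero
  have hd₂ := (h₂.contDiffAt (hD.mem_nhds hz)).differentiableAt one_ne_zero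
  refine eq_zero_of_add_emb_mul_eq_zero H hw ?_ ?_
  · rw [← DomCR_add_emb_mul H hv hp hw hd₁ hd₂, hpos.domCR_eq_zero z hz]
  · rw [← DomCR_add_emb_mul H hv hp (neg_mem_Sph H hw) hd₁ hd₂, hneg.domCR_eq_zero z hz]

variable (hDrefl : ∀ z ∈ D, reflD p z ∈ D)
include hDrefl

lemma GSM_OmegaD_iff : GSM v m p f (OmegaD v m p D) ↔
    ∀ w ∈ Sph v m p, IsSliceMonogenicOn v m p w (sliceFun m p f w) D := by
  refine forall₂_congr fun w hw ↦ ?_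
  rw [sliceSet_OmegaD H hv hp hDrefl hw]
  exact ⟨fun h ↦ ⟨h.1, h.2⟩, fun h ↦ ⟨h.1, h.2⟩⟩

lemma MemGSR.gsm (hD : IsOpen D) (hf : MemGSR v m p D f) : GSM v m p f (OmegaD v m p D) := by
  obtain ⟨F₁, F₂, -, h₁, h₂, hind, hF⟩ := hf
  exact (GSM_OmegaD_iff H hv hp hDrefl).2 fun w hw ↦
    (hF.isSliceMonogenicOn H hv hp hD h₁ h₂ hw).congr hD (hind w hw)

end Stem

section Strict

variable {conj : A → A} (H : IsAltStarAlg A conj) {v : ℕ → A} {m p : ℕ}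
  (hv : IsHypBasis A conj v m) {D : Set ((Fin (p + 1) → ℝ) × ℝ)}
include H hv

lemma eventuallyEq_normq_pt {w : Fin (m + 1) → ℝ} (hw : w ∈ Sph v m p)
    {z₀ : (Fin (p + 1) → ℝ) × ℝ} (hz₀ : z₀.2 ≠ 0) :
    (fun z : (Fin (p + 1) → ℝ) × ℝ ↦ normq m p (pt m p w z.1 z.2)) =ᶠ[𝓝 z₀]
      fun _ ↦ normq m p (pt m p w z₀.1 z₀.2) := by
  rcases hz₀.lt_or_gt with hr | hr
  · filter_upwards [continuous_snd.continuousAt.eventually_lt_const hr] with z hz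
    rw [normq_pt_of_neg H hv hw _ hz, normq_pt_of_neg H hv hw _ hr]
  · filter_upwards [continuous_snd.continuousAt.eventually_const_lt hr] with z hz
    rw [normq_pt_of_pos H hv hw _ hz, normq_pt_of_pos H hv hw _ hr]

variable (hp : p < m) (hDrefl : ∀ z ∈ D, reflD p z ∈ D)
include hp hDrefl

lemma GSM_comp_normq (hD₀ : ∀ z ∈ D, z.2 ≠ 0) (c : (Fin (m + 1) → ℝ) → A) :
    GSM v m p (c ∘ normq m p) (OmegaD v m p D) := by
  refine (GSM_OmegaD_iff H hv hp hDrefl).2 fun w hw ↦ ?_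
  have hloc (z : (Fin (p + 1) → ℝ) × ℝ) (hz : z ∈ D) :
      sliceFun m p (c ∘ normq m p) w =ᶠ[𝓝 z] fun _ ↦ sliceFun m p (c ∘ normq m p) w z :=
    (eventuallyEq_normq_pt H hv hw (hD₀ z hz)).fun_comp c
  refine ⟨fun z hz ↦ (contDiffAt_const.congr_of_eventuallyEq (hloc z hz)).contDiffWithinAt,
    fun z hz ↦ ?_⟩
  simp [DomCR, DopSx, pdSx, pdSr, (hloc z hz).fderiv_eq, H.mul_zero]

/-- Otherwise `x_m` would change sign on the connected set `Ω_D` without vanishing there. -/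
lemma succ_lt_of_isPreconnected_OmegaD (hΩ : IsPreconnected (OmegaD v m p D)) (hne : D.Nonempty)
    (hD₀ : ∀ z ∈ D, z.2 ≠ 0) : p + 1 < m := by
  by_contra! hm
  obtain ⟨z, hz, hr⟩ := exists_mem_snd_pos hDrefl hne hD₀
  let η : Fin (m + 1) → ℝ := Pi.single (Fin.last m) 1
  have hη : η ∈ Sph v m p := hv.single_mem_Sph H hp
  have hlast (r : ℝ) : pt m p η z.1 r (Fin.last m) = r := by
    simp [pt_apply_of_lt (s := Fin.last m) z.1 r hp, η]
  obtain ⟨_, ⟨w, hw, z', hz', rfl⟩, hzero⟩ : (0 : ℝ) ∈ (· (Fin.last m)) '' OmegaD v m p D := by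
    refine hΩ.intermediate_value ⟨η, hη, _, hDrefl z hz, rfl⟩ ⟨η, hη, z, hz, rfl⟩
      (continuous_apply _).continuousOn ?_
    simpa only [reflD, hlast] using ⟨neg_nonpos.2 hr.le, hr.le⟩
  have hw_last : w (Fin.last m) = 0 :=
    (mul_eq_zero.1 ((pt_apply_of_lt z'.1 z'.2 hp).symm.trans hzero)).resolve_left (hD₀ z' hz')
  have hw₀ : w = 0 := by
    funext s
    rcases s.le_last.eq_or_lt with rfl | hs
    · exact hw_last
    · exact hw.1 s (by have : (s : ℕ) < m := hs; omega)
  simpa [hw₀] using ((hv.mem_Sph_iff H).1 hw).2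

lemma exists_GSM_not_memGSR (hΩ : IsPreconnected (OmegaD v m p D)) (hne : D.Nonempty)
    (hD₀ : ∀ z ∈ D, z.2 ≠ 0) : ∃ f, GSM v m p f (OmegaD v m p D) ∧ ¬MemGSR v m p D f := by
  have hpm : p + 1 < m := succ_lt_of_isPreconnected_OmegaD H hv hp hDrefl hΩ hne hD₀
  obtain ⟨z, hz, hr⟩ := exists_mem_snd_pos hDrefl hne hD₀
  let ω₀ : Fin (m + 1) → ℝ := Pi.single (Fin.last m) 1
  let η : Fin (m + 1) → ℝ := Pi.single ⟨p + 1, by omega⟩ 1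
  have hω₀ : ω₀ ∈ Sph v m p := hv.single_mem_Sph H hp
  have hη : η ∈ Sph v m p := hv.single_mem_Sph H p.lt_succ_self
  have hη_last : η (Fin.last m) = 0 := Pi.single_eq_of_ne (Fin.ne_of_gt hpm) 1
  let c : (Fin (m + 1) → ℝ) → A := Set.indicator {ω₀} 1
  have hc {w : Fin (m + 1) → ℝ} (hw : w (Fin.last m) = 0) : c w = 0 :=
    Set.indicator_of_notMem (fun h ↦ by simp [Set.mem_singleton_iff.1 h, ω₀] at hw) 1
  refine ⟨c ∘ normq m p, GSM_comp_normq H hv hp hDrefl hD₀ c, ?_⟩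
  rintro ⟨F₁, F₂, -, -, -, hind, -⟩
  have hval {w : Fin (m + 1) → ℝ} (hw : w ∈ Sph v m p) : F₁ z + emb v m w * F₂ z = c w := by
    rw [← hind w hw z hz, Function.comp_apply, normq_pt_of_pos H hv hw _ hr]
  obtain ⟨hF₁, hF₂⟩ := eq_zero_of_add_emb_mul_eq_zero H hη ((hval hη).trans (hc hη_last))
    ((hval (neg_mem_Sph H hη)).trans (hc (neg_eq_zero.2 hη_last)))
  have hone : c ω₀ = 1 := Set.indicator_of_mem rfl 1
  rw [← hval hω₀, hF₁, hF₂, H.mul_zero, add_zero] at hone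
  exact H.one_ne_zero hone.symm

end Strict

section Representation

/-- The even stem component recovered from the restrictions `f_η` and `f_{-η}` of a slice function
`f`, that is `F₁ = (f_η + f_{-η}) / 2`. -/
noncomputable def stemEven (m p : ℕ) (η : Fin (m + 1) → ℝ) (f : (Fin (m + 1) → ℝ) → A)
    (z : (Fin (p + 1) → ℝ) × ℝ) : A :=
  (2 : ℝ)⁻¹ • (sliceFun m p f η z + sliceFun m p f (-η) z)

/-- The odd stem component recovered from the restrictions `f_η` and `f_{-η}` of a slice function
`f`, that is `F₂ = η⁻¹ (f_η - f_{-η}) / 2`; note `η⁻¹ = -η`. -/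
noncomputable def stemOdd (v : ℕ → A) (m p : ℕ) (η : Fin (m + 1) → ℝ)
    (f : (Fin (m + 1) → ℝ) → A) (z : (Fin (p + 1) → ℝ) × ℝ) : A :=
  emb v m η * (-(2 : ℝ)⁻¹ • (sliceFun m p f η z - sliceFun m p f (-η) z))

variable {conj : A → A} (H : IsAltStarAlg A conj) {v : ℕ → A} {m p : ℕ}
  {η : Fin (m + 1) → ℝ} {D : Set ((Fin (p + 1) → ℝ) × ℝ)} {f : (Fin (m + 1) → ℝ) → A}

include H

lemma isStem_stemEven_stemOdd : IsStem p D (stemEven m p η f) (stemOdd v m p η f) := by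
  intro z _
  simp only [stemEven, stemOdd, sliceFun_neg, reflD_reflD, ← H.mul_neg, ← smul_neg, neg_sub,
    add_comm, and_self]

section UnitVector

variable (hη : η ∈ Sph v m p)
include hη

lemma stemEven_add_emb_mul_stemOdd (z : (Fin (p + 1) → ℝ) × ℝ) :
    stemEven m p η f z + emb v m η * stemOdd v m p η f z = sliceFun m p f η z := by
  rw [stemEven, stemOdd, emb_mul_emb_mul H hη]
  module

lemma stemEven_add_emb_neg_mul_stemOdd (z : (Fin (p + 1) → ℝ) × ℝ) :
    stemEven m p η f z + emb v m (-η) * stemOdd v m p η f z = sliceFun m p f (-η) z := by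
  rw [stemEven, stemOdd, emb_neg, H.neg_mul, emb_mul_emb_mul H hη]
  module

end UnitVector

variable (hv : IsHypBasis A conj v m) (hp : p < m) (hD : IsOpen D)
include hv hp hD

lemma stemCR_stemEven_stemOdd (hη : η ∈ Sph v m p)
    (hpos : IsSliceMonogenicOn v m p η (sliceFun m p f η) D)
    (hneg : IsSliceMonogenicOn v m p (-η) (sliceFun m p f (-η)) D) :
    ContDiffOn ℝ 1 (stemEven m p η f) D ∧ ContDiffOn ℝ 1 (stemOdd v m p η f) D ∧
      StemCR v p D (stemEven m p η f) (stemOdd v m p η f) := by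
  have h₁ : ContDiffOn ℝ 1 (stemEven m p η f) D :=
    (hpos.contDiffOn.add hneg.contDiffOn).const_smul _
  have h₂ : ContDiffOn ℝ 1 (stemOdd v m p η f) D :=
    (H.lmul (emb v m η)).contDiff.comp_contDiffOn
      ((hpos.contDiffOn.sub hneg.contDiffOn).const_smul _)
  refine ⟨h₁, h₂, stemCR_of_isSliceMonogenicOn H hv hp hD h₁ h₂ hη ?_ ?_⟩
  · simpa only [stemEven_add_emb_mul_stemOdd H hη] using hpos
  · simpa only [stemEven_add_emb_neg_mul_stemOdd H hη] using hneg

lemma GSM.memGSR (hDrefl : ∀ z ∈ D, reflD p z ∈ D) (hΩ : IsPreconnected (OmegaD v m p D))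
    (hne : ∃ z ∈ D, z.2 = 0) (hf : GSM v m p f (OmegaD v m p D)) : MemGSR v m p D f := by
  rw [GSM_OmegaD_iff H hv hp hDrefl] at hf
  obtain ⟨η, hη⟩ := exists_mem_Sph H hv hp
  obtain ⟨h₁, h₂, hF⟩ :=
    stemCR_stemEven_stemOdd H hv hp hD hη (hf η hη) (hf (-η) (neg_mem_Sph H hη))
  have hDc : IsPreconnected D := by
    obtain ⟨z₀, hz₀, hr₀⟩ := hne
    exact isPreconnected_of_OmegaD H hv hp hDrefl hΩ hz₀ hr₀
  refine ⟨_, _, isStem_stemEven_stemOdd H, h₁, h₂, fun w hw ↦ ?_, hF⟩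
  refine (hf w hw).eqOn_of_eqOn_real H hv hp hw hD hDc
    (hF.isSliceMonogenicOn H hv hp hD h₁ h₂ hw) (fun z _ hr ↦ ?_) hne
  simp [stemEven, stemOdd, sliceFun, pt, hr, H.mul_zero, ← two_smul ℝ]

end Representation

/-- Relation between generalized partial-slice regular and generalized partial-slice
monogenic functions on a p-symmetric domain `Ω = Ω_D`:
(i) if `Ω ∩ ℝ^{p+1} = ∅` then `GSR(Ω_D) ⊊ GSM(Ω)`;
(ii) if `Ω ∩ ℝ^{p+1} ≠ ∅` then `GSM(Ω) = GSR(Ω_D)`. -/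
theorem gsr_gsm_relation
    {A : Type*} [NormedAddCommGroup A] [NormedSpace ℝ A] [Mul A] [One A]
    (conj : A → A) (H : IsAltStarAlg A conj)
    (v : ℕ → A) (m p : ℕ) (hv : IsHypBasis A conj v m) (hp : p < m)
    (D : Set ((Fin (p + 1) → ℝ) × ℝ)) (hD : IsOpen D)
    (hDrefl : ∀ z ∈ D, reflD p z ∈ D)
    (hdom : IsConnected (OmegaD v m p D)) :
    ((OmegaD v m p D ∩ {x | xqpart m p x = 0}) = ∅ →
      {f : (Fin (m + 1) → ℝ) → A | MemGSR v m p D f} ⊂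
        {f : (Fin (m + 1) → ℝ) → A | GSM v m p f (OmegaD v m p D)}) ∧
    ((OmegaD v m p D ∩ {x | xqpart m p x = 0}).Nonempty →
      {f : (Fin (m + 1) → ℝ) → A | GSM v m p f (OmegaD v m p D)} =
        {f : (Fin (m + 1) → ℝ) → A | MemGSR v m p D f}) := by
  have hΩ := hdom.isPreconnected
  have hsub (f : (Fin (m + 1) → ℝ) → A) (hf : MemGSR v m p D f) : GSM v m p f (OmegaD v m p D) :=
    hf.gsm H hv hp hDrefl hD
  refine ⟨fun hempty ↦ ?_, fun hne ↦ ?_⟩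
  · have hD₀ (z) (hz : z ∈ D) (hr : z.2 = 0) : False :=
      Set.nonempty_iff_ne_empty.1 ((OmegaD_inter_nonempty_iff H hv hp).2 ⟨z, hz, hr⟩) hempty
    have hDne : D.Nonempty := by
      obtain ⟨_, _, _, z, hz, _⟩ := hdom.nonempty
      exact ⟨z, hz⟩
    exact Set.ssubset_iff_exists.2 ⟨hsub, exists_GSM_not_memGSR H hv hp hDrefl hΩ hDne hD₀⟩
  · have hD₀ := (OmegaD_inter_nonempty_iff H hv hp).1 hne
    exact Set.Subset.antisymm (fun f hf ↦ GSM.memGSR H hv hp hD hDrefl hΩ hD₀ hf) hsub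

end GPSM
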